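/- Let X be the punctured Möbius band with boundary circles C₁ and C₂. Suppose f : X → X is a boundary-preserving map and there is j ∈ {1,2} such that f(∂X) ⊆ C_j and both restrictions, viewed as maps f|C₁ : C₁ → C_j and f|C₂ : C₂ → C_j, are essential. Then f is boundary-homotopic to a map g : X → X with g(X) ⊆ C_j; in particular, every fixed point of g lies on the boundary circle C_j. -/

import Mathlib

open Set

namespace PMB

/-- The square [0,1] × [−1,1] as a subspace of ℝ². -/
def Sq : Set (ℝ × ℝ) := Set.Icc 0 1 ×ˢ Set.Icc (-1) 1

/-- The identification (0,y) ∼ (1,−y) on the square. -/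
def rel (p q : Sq) : Prop :=
  (p : ℝ × ℝ) = (q : ℝ × ℝ) ∨
  ((p : ℝ × ℝ).1 = 0 ∧ (q : ℝ × ℝ).1 = 1 ∧ (p : ℝ × ℝ).2 = -(q : ℝ × ℝ).2) ∨
  ((p : ℝ × ℝ).1 = 1 ∧ (q : ℝ × ℝ).1 = 0 ∧ (q : ℝ × ℝ).2 = -(p : ℝ × ℝ).2)

/-- The Möbius band: the quotient of the square by the identification. -/
def M := Quot rel

instance : TopologicalSpace M := inferInstanceAs (TopologicalSpace (Quot rel))

/-- The quotient map. -/
def qm : Sq → M := Quot.mk rel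

/-- The open disc of radius 1/4 centred at (1/2, 0). -/
def Bdisc : Set (ℝ × ℝ) := Metric.ball (1/2, 0) (1/4)

/-- The circle of radius 1/4 centred at (1/2, 0). -/
def Scirc : Set (ℝ × ℝ) := Metric.sphere (1/2, 0) (1/4)

/-- The punctured Möbius band, as a subset of the Möbius band. -/
def Xset : Set M := {m | m ∉ qm '' {p : Sq | (p : ℝ × ℝ) ∈ Bdisc}}

/-- The punctured Möbius band as a topological space. -/
abbrev X : Type := ↥Xset

/-- The boundary circle of the Möbius band. -/
def C1 : Set X := {x | ∃ p : Sq, qm p = (x : M) ∧ ((p : ℝ × ℝ).2 = 1 ∨ (p : ℝ × ℝ).2 = -1)}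

/-- The boundary circle coming from the removed disc. -/
def C2 : Set X := {x | ∃ p : Sq, qm p = (x : M) ∧ (p : ℝ × ℝ) ∈ Scirc}

/-- The boundary of the punctured Möbius band. -/
def Bd : Set X := C1 ∪ C2

/-- A self-map of the punctured Möbius band is boundary-preserving if it sends ∂X into ∂X. -/
def BoundaryPreserving (f : C(X, X)) : Prop := MapsTo f Bd Bd

/-- Two self-maps are boundary-homotopic if there is a homotopy between them keeping
∂X inside ∂X at all times. -/
def BoundaryHomotopic (f g : C(X, X)) : Prop :=
  ∃ H : ContinuousMap.Homotopy f g, ∀ x : X, x ∈ Bd → ∀ t : unitInterval, H (t, x) ∈ Bd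

/-- A continuous map is inessential if it is homotopic to a constant map. -/
def Inessential {α β : Type*} [TopologicalSpace α] [TopologicalSpace β] (f : C(α, β)) : Prop :=
  ∃ b : β, ContinuousMap.Homotopic f (ContinuousMap.const α b)

/-- A continuous map is essential if it is not homotopic to a constant map. -/
def Essential {α β : Type*} [TopologicalSpace α] [TopologicalSpace β] (f : C(α, β)) : Prop :=
  ¬ Inessential f

/-- The restriction of a self-map of X to a subset `s` mapped into a subset `t`,
as a continuous map between the subspaces. -/
def restrictMap (f : C(X, X)) {s t : Set X} (h : MapsTo f s t) : C(s, t) :=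
  ⟨fun x => ⟨f x, h x.2⟩, Continuous.subtype_mk (f.continuous.comp continuous_subtype_val) _⟩

/-!
The pair `(X, C_j)` is homotopy dominated by `(Θ, S)`, where `Θ` is the theta graph and `S` the
circle formed by two of its edges: `X` deforms onto a theta-shaped spine keeping `C_j` invariant.
So it suffices to push a map `q : X → Θ` with `q(∂X) ⊆ S` into `S` relative to `∂X`.

The universal cover of `Θ` is a tree on which the free group `π₁ Θ` acts; it is realized here by the
Sanov subgroup of `SL₂(ℤ)`, in which `π₁ S` is the group `U` of upper triangular matrices. The lines
over `S` are the translates of one line, with stabilizer `U`, onto which the tree contracts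
`U`-equivariantly. In polar coordinates `X` is an annulus with inner circle `C₂` whose outer circle
is glued to itself along two opposite arcs. A lift of `q` to the annulus sends `C₂` to the line, and
has monodromy `k ∈ U` around `C₂` and `w` across the glued arcs, so that `C₁` maps to the class of
`w⁻¹ k w⁻¹`. If `q` is essential on `C₂`, then `k ≠ 1`; comparing traces, `w⁻¹ k w⁻¹` is conjugate
into `U` only if `w ∈ U`. If `q` is essential on `C₁`, then `w⁻¹ k w⁻¹ ≠ 1` forces the lift of `C₁`
onto the line as well. The equivariant contraction of the tree now descends to the homotopy.
-/

open scoped Pointwise unitInterval Real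

/-- The retraction of the real line onto the unit interval. -/
noncomputable def clamp : C(ℝ, I) := ⟨projIcc 0 1 zero_le_one, continuous_projIcc⟩

@[simp] lemma clamp_coe (t : I) : clamp t = t := projIcc_val zero_le_one t

lemma coe_clamp {x : ℝ} (hx : x ∈ I) : (clamp x : ℝ) = x :=
  congrArg Subtype.val (projIcc_of_mem zero_le_one hx)

lemma clamp_of_nonpos {x : ℝ} (hx : x ≤ 0) : clamp x = 0 := projIcc_of_le_left zero_le_one hx

lemma clamp_of_one_le {x : ℝ} (hx : 1 ≤ x) : clamp x = 1 := projIcc_of_right_le zero_le_one hx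

section CayleyGraph

variable {G ι : Type*} [Group G]

/-- The gluing of the unit intervals indexed by `G × ι` at their ends: two initial points are glued
when they carry the same group element, two endpoints when they carry the same product `g * c i`. -/
def EndsGlued (c : ι → G) (x y : Σ _ : G × ι, I) : Prop :=
  (x.2 = 0 ∧ y.2 = 0 ∧ x.1.1 = y.1.1) ∨
    (x.2 = 1 ∧ y.2 = 1 ∧ x.1.1 * c x.1.2 = y.1.1 * c y.1.2)

/-- The bipartite Cayley graph of `c : ι → G` as a topological space: its vertices are two copies
of `G`, white and black, and an edge runs from the white `g` to the black `g * c i` for all `g`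
and `i`. It covers the graph with two vertices and edge set `ι`. -/
def CayleyGraph (c : ι → G) : Type _ := Quot (EndsGlued c)

namespace CayleyGraph

variable (c : ι → G) {Z : Type*} [TopologicalSpace Z]

instance : TopologicalSpace (CayleyGraph c) := inferInstanceAs (TopologicalSpace (Quot _))

/-- The edge of the bipartite Cayley graph from the white vertex `g` to the black vertex
`g * c i`. -/
def edge (g : G) (i : ι) : C(I, CayleyGraph c) where
  toFun a := Quot.mk _ ⟨(g, i), a⟩
  continuous_toFun := continuous_quot_mk.comp continuous_sigmaMk

variable {c}

lemma edge_zero (g : G) (i j : ι) : edge c g i 0 = edge c g j 0 :=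
  Quot.sound (.inl ⟨rfl, rfl, rfl⟩)

lemma edge_one {g h : G} {i j : ι} (e : g * c i = h * c j) : edge c g i 1 = edge c h j 1 :=
  Quot.sound (.inr ⟨rfl, rfl, e⟩)

lemma edge_induction {p : CayleyGraph c → Prop} (h : ∀ g i a, p (edge c g i a)) (e) : p e := by
  obtain ⟨⟨⟨g, i⟩, a⟩, rfl⟩ := Quot.exists_rep e
  exact h g i a

/-- The map out of the bipartite Cayley graph assembled from paths, one for each edge, that agree
at the vertices. -/
def lift (β : G → ι → C(I, Z)) (P Q : G → Z) (hP : ∀ g i, β g i 0 = P g)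
    (hQ : ∀ g i, β g i 1 = Q (g * c i)) : C(CayleyGraph c, Z) where
  toFun := Quot.lift (fun x => β x.1.1 x.1.2 x.2) (by
    rintro ⟨⟨g, i⟩, a⟩ ⟨⟨h, j⟩, b⟩ (⟨rfl, rfl, rfl⟩ | ⟨rfl, rfl, e⟩)
    · exact (hP _ _).trans (hP _ _).symm
    · exact (hQ _ _).trans ((congrArg Q e).trans (hQ _ _).symm))
  continuous_toFun := continuous_quot_lift _ (continuous_sigma fun x => (β x.1 x.2).continuous)

/-- The function on the bipartite Cayley graph with prescribed values on the white and on the black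
vertices that is affine on the edges. -/
def interpolate (P Q : G → ℝ) : C(CayleyGraph c, ℝ) :=
  lift (fun g i => ⟨fun a => (1 - a) * P g + a * Q (g * c i), by fun_prop⟩) P Q
    (by simp) (by simp)

lemma interpolate_edge (P Q : G → ℝ) (g : G) (i : ι) (a : I) :
    interpolate P Q (edge c g i a) = (1 - a) * P g + a * Q (g * c i) :=
  rfl

instance : MulAction G (CayleyGraph c) where
  smul g := Quot.map (fun x => ⟨(g * x.1.1, x.1.2), x.2⟩) (by
    rintro x y (⟨hx, hy, h⟩ | ⟨hx, hy, h⟩)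
    · exact .inl ⟨hx, hy, congrArg (g * ·) h⟩
    · exact .inr ⟨hx, hy, by simp only [mul_assoc, h]⟩)
  one_smul := edge_induction fun g i a => congrArg (edge c · i a) (one_mul g)
  mul_smul g h := edge_induction fun k i a => congrArg (edge c · i a) (mul_assoc g h k)

lemma smul_edge (g h : G) (i : ι) (a : I) : g • edge c h i a = edge c (g * h) i a := rfl

instance : ContinuousConstSMul G (CayleyGraph c) where
  continuous_const_smul g := continuous_quot_lift _
    (continuous_sigma fun x => (edge c (g * x.1) x.2).continuous)

variable (c) in
/-- The quotient of the bipartite Cayley graph by the group: two vertices joined by edges indexed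
by `ι`. -/
abbrev OrbitSpace : Type _ := Quotient (MulAction.orbitRel G (CayleyGraph c))

variable (c) in
/-- The projection of the bipartite Cayley graph to its quotient by the group. -/
def proj : C(CayleyGraph c, OrbitSpace c) := ⟨Quotient.mk _, continuous_quotient_mk'⟩

lemma exists_nhds_disjoint_smul (e : CayleyGraph c) :
    ∃ N ∈ nhds e, ∀ g : G, ((g • ·) '' N ∩ N).Nonempty → g = 1 := by
  classical
  induction e using edge_induction with | h g i a
  rcases eq_or_ne a 1 with rfl | ha
  · refine ⟨{e | 0 < interpolate (fun _ => 0) (fun h => if h = g * c i then 1 else 0) e},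
      (isOpen_lt continuous_const (map_continuous _)).mem_nhds (by simp [interpolate_edge]), ?_⟩
    rintro k ⟨_, ⟨e, he, rfl⟩, hke⟩
    induction e using edge_induction with | h h j b
    by_contra hk
    have : k * h * c j ≠ h * c j := by simpa [mul_assoc] using hk
    simp only [mem_ofPred_eq, smul_edge, interpolate_edge] at he hke
    split_ifs at he hke <;> simp_all
  · have ha' : (a : ℝ) < 1 := unitInterval.lt_one_iff_ne_one.mpr ha
    refine ⟨{e | 0 < interpolate (fun h => if h = g then 1 else 0) (fun _ => 0) e},
      (isOpen_lt continuous_const (map_continuous _)).mem_nhds (by simp [interpolate_edge, ha']),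
      ?_⟩
    rintro k ⟨_, ⟨e, he, rfl⟩, hke⟩
    induction e using edge_induction with | h h j b
    by_contra hk
    have : k * h ≠ h := by simpa using hk
    simp only [mem_ofPred_eq, smul_edge, interpolate_edge] at he hke
    split_ifs at he hke <;> simp_all

theorem isQuotientCoveringMap_proj : IsQuotientCoveringMap (proj c) G where
  toIsQuotientMap := isQuotientMap_quotient_mk'
  continuous_const_smul := continuous_const_smul
  apply_eq_iff_mem_orbit := Quotient.eq''
  disjoint := exists_nhds_disjoint_smul

lemma proj_smul (g : G) (e : CayleyGraph c) : proj c (g • e) = proj c e :=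
  isQuotientCoveringMap_proj.map_smul g

lemma exists_lift (φ : C(ℝ × I, OrbitSpace c)) (z : ℝ × I) (e : CayleyGraph c)
    (he : proj c e = φ z) : ∃ F : C(ℝ × I, CayleyGraph c), F z = e ∧ ∀ x, proj c (F x) = φ x := by
  let retract : C(ℝ × ℝ, ℝ × I) := ⟨Prod.map id clamp, by fun_prop⟩
  let coe : C(ℝ × I, ℝ × ℝ) := ⟨Prod.map id (↑), by fun_prop⟩
  have hretract : ∀ x, retract (coe x) = x := fun x => Prod.ext rfl (clamp_coe x.2)
  obtain ⟨F, ⟨hz, hF⟩, -⟩ :=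
    isQuotientCoveringMap_proj.isCoveringMap.existsUnique_continuousMap_lifts (φ.comp retract)
      (coe z) e (he.trans (congrArg φ (hretract z).symm))
  exact ⟨F.comp coe, hz, fun x => (congrFun hF (coe x)).trans (congrArg φ (hretract x))⟩

lemma exists_smul_eqOn {α : Type*} [TopologicalSpace α] {s : Set α} (hs : IsPreconnected s)
    (hne : s.Nonempty) {κ κ' : α → CayleyGraph c} (hκ : ContinuousOn κ s)
    (hκ' : ContinuousOn κ' s) (h : ∀ x ∈ s, proj c (κ x) = proj c (κ' x)) :
    ∃ g : G, ∀ x ∈ s, κ x = g • κ' x := by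
  obtain ⟨x₀, hx₀⟩ := hne
  obtain ⟨g, hg⟩ := isQuotientCoveringMap_proj.apply_eq_iff_mem_orbit.mp (h x₀ hx₀)
  exact ⟨g, isQuotientCoveringMap_proj.isCoveringMap.eqOn_of_comp_eqOn hs hκ
    ((continuous_const_smul g).comp_continuousOn hκ')
    (fun x hx => (h x hx).trans (proj_smul g _).symm) hx₀ hg.symm⟩

variable (c) in
/-- The union of the edges with label in `S` that issue from the white vertices in the subgroup
`U`. When `U` contains `c i` for `i ∈ S`, its translates are pairwise equal or disjoint. -/
def subgraph (U : Subgroup G) (S : Set ι) : Set (CayleyGraph c) :=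
  {e | ∃ g ∈ U, ∃ i ∈ S, ∃ a, edge c g i a = e}

variable (c) in
/-- The image in the orbit space of the edges with label in `S`. -/
def orbitSubgraph (S : Set ι) : Set (OrbitSpace c) :=
  {y | ∃ i ∈ S, ∃ a, proj c (edge c 1 i a) = y}

variable {U : Subgroup G} {S : Set ι}

lemma edge_mem_subgraph {g : G} {i : ι} (hg : g ∈ U) (hi : i ∈ S) (a : I) :
    edge c g i a ∈ subgraph c U S :=
  ⟨g, hg, i, hi, a, rfl⟩

lemma exists_mem_smul_subgraph {e : CayleyGraph c} (he : proj c e ∈ orbitSubgraph c S) :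
    ∃ g : G, e ∈ g • subgraph c U S := by
  obtain ⟨i, hi, a, h⟩ := he
  obtain ⟨g, hg⟩ := isQuotientCoveringMap_proj.apply_eq_iff_mem_orbit.mp h.symm
  exact ⟨g, hg ▸ smul_mem_smul_set (edge_mem_subgraph U.one_mem hi a)⟩

lemma proj_mem_orbitSubgraph {e : CayleyGraph c} {g : G} (he : e ∈ g • subgraph c U S) :
    proj c e ∈ orbitSubgraph c S := by
  obtain ⟨_, ⟨h, -, i, hi, a, rfl⟩, rfl⟩ := he
  refine ⟨i, hi, a, ?_⟩
  simp only [smul_edge]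
  rw [← mul_one (g * h), ← smul_edge, proj_smul]

open Classical in
/-- The function that is `1` at the vertices in `u U` and `0` at all other vertices. It takes
the same value throughout a translate of `subgraph c U S` and so tells these translates apart. -/
noncomputable def cosetIndicator (U : Subgroup G) (u : G) : C(CayleyGraph c, ℝ) :=
  interpolate (fun g => if u⁻¹ * g ∈ U then 1 else 0) (fun g => if u⁻¹ * g ∈ U then 1 else 0)

open Classical in
lemma cosetIndicator_of_mem (hU : ∀ i ∈ S, c i ∈ U) {u v : G} {e : CayleyGraph c}
    (he : e ∈ v • subgraph c U S) : cosetIndicator U u e = if u⁻¹ * v ∈ U then 1 else 0 := by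
  obtain ⟨_, ⟨g, hg, i, hi, a, rfl⟩, rfl⟩ := he
  simp only [smul_edge, cosetIndicator, interpolate_edge, ← mul_assoc,
    U.mul_mem_cancel_right hg, U.mul_mem_cancel_right (hU i hi)]
  ring

lemma inv_mul_mem_of_mem_smul_subgraph (hU : ∀ i ∈ S, c i ∈ U) {u v : G} {e : CayleyGraph c}
    (hu : e ∈ u • subgraph c U S) (hv : e ∈ v • subgraph c U S) : u⁻¹ * v ∈ U := by
  classical
  by_contra h
  simpa [h] using (cosetIndicator_of_mem (u := u) hU hu).symm.trans (cosetIndicator_of_mem hU hv)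

lemma smul_subgraph {u : G} (hu : u ∈ U) : u • subgraph c U S = subgraph c U S := by
  suffices h : ∀ v ∈ U, v • subgraph c U S ⊆ subgraph c U S from
    (h u hu).antisymm (by simpa [subset_smul_set_iff] using h u⁻¹ (U.inv_mem hu))
  rintro v hv _ ⟨_, ⟨g, hg, i, hi, a, rfl⟩, rfl⟩
  exact edge_mem_subgraph (U.mul_mem hv hg) hi a

lemma exists_mapsTo_smul_subgraph (hU : ∀ i ∈ S, c i ∈ U) {α : Type*} [TopologicalSpace α]
    {s : Set α} (hs : IsPreconnected s) (hne : s.Nonempty) {κ : α → CayleyGraph c}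
    (hκ : ContinuousOn κ s) (h : ∀ x ∈ s, proj c (κ x) ∈ orbitSubgraph c S) :
    ∃ u : G, MapsTo κ s (u • subgraph c U S) := by
  classical
  choose! v hv using fun x hx => exists_mem_smul_subgraph (U := U) (h x hx)
  obtain ⟨x₀, hx₀⟩ := hne
  refine ⟨v x₀, fun x hx => ?_⟩
  have hval : MapsTo (fun x => cosetIndicator U (v x₀) (κ x)) s ({0, 1} : Set ℝ) := by
    intro y hy
    simp only [cosetIndicator_of_mem hU (hv y hy)]
    split_ifs <;> simp
  have hconst : cosetIndicator U (v x₀) (κ x) = cosetIndicator U (v x₀) (κ x₀) :=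
    hs.constant_of_mapsTo (toFinite _).isDiscrete ((map_continuous _).comp_continuousOn hκ) hval
      hx hx₀
  rw [cosetIndicator_of_mem hU (hv x hx), cosetIndicator_of_mem hU (hv x₀ hx₀), inv_mul_cancel,
    if_pos U.one_mem] at hconst
  have hmem : (v x₀)⁻¹ * v x ∈ U := by
    by_contra h
    simp [h] at hconst
  have hx' := hv x hx
  rwa [← mul_inv_cancel_left (v x₀) (v x), mul_smul, smul_subgraph hmem] at hx'

section Contraction

/-- The neighbour of a vertex of the bipartite Cayley graph along the edge labelled `i`; `inl` marks
the white and `inr` the black vertices. -/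
def neighbor (c : ι → G) : G ⊕ G → ι → G ⊕ G
  | .inl g, i => .inr (g * c i)
  | .inr g, i => .inl (g * (c i)⁻¹)

/-- The edge labelled `i` at a vertex, directed away from that vertex. -/
def seg (c : ι → G) : G ⊕ G → ι → C(I, CayleyGraph c)
  | .inl g, i => edge c g i
  | .inr g, i => (edge c (g * (c i)⁻¹) i).comp ⟨σ, unitInterval.continuous_symm⟩

lemma seg_inr (g : G) (i : ι) (a : I) :
    seg c (.inr g) i a = edge c (g * (c i)⁻¹) i (σ a) :=
  rfl

lemma seg_zero (v : G ⊕ G) (i j : ι) : seg c v i 0 = seg c v j 0 := by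
  cases v with
  | inl g => exact edge_zero g i j
  | inr g =>
    rw [seg_inr, seg_inr, unitInterval.symm_zero]
    exact edge_one (by simp)

lemma seg_one (v : G ⊕ G) (i j : ι) : seg c v i 1 = seg c (neighbor c v i) j 0 := by
  cases v with
  | inl g =>
    rw [neighbor, seg_inr, unitInterval.symm_zero]
    exact edge_one (by simp)
  | inr g =>
    rw [seg_inr, unitInterval.symm_one]
    exact edge_zero _ i j

lemma seg_smul (g : G) (v : G ⊕ G) (i : ι) (a : I) : seg c (g • v) i a = g • seg c v i a := by
  cases v with
  | inl h => rfl
  | inr h => exact congrArg (edge c · i (σ a)) (mul_assoc g h _)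

lemma neighbor_smul (g : G) (v : G ⊕ G) (i : ι) : neighbor c (g • v) i = g • neighbor c v i := by
  cases v with
  | inl h => exact congrArg Sum.inr (mul_assoc g h _)
  | inr h => exact congrArg Sum.inl (mul_assoc g h _)

/-- Data exhibiting the bipartite Cayley graph as `subgraph c U S` with rooted trees attached, in a
`U`-invariant way: `depth` is the distance to the subgraph, `down v` labels the edge from `v`
towards it, and each edge lies in the subgraph or joins a vertex to its parent. -/
structure Descent (c : ι → G) (U : Subgroup G) (S : Set ι) where
  depth : G ⊕ G → ℕ
  down : G ⊕ G → ι
  depth_smul : ∀ u ∈ U, ∀ v, depth (u • v) = depth v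
  down_smul : ∀ u ∈ U, ∀ v, down (u • v) = down v
  gen_mem : ∀ i ∈ S, c i ∈ U
  down_mem : ∀ v, depth v = 0 → down v ∈ S
  depth_eq_zero : ∀ v, depth v = 0 ↔ v.elim id id ∈ U
  depth_neighbor : ∀ v, depth v ≠ 0 → depth v = depth (neighbor c v (down v)) + 1
  edge_cases : ∀ g i, (g ∈ U ∧ i ∈ S) ∨ (depth (.inl g) ≠ 0 ∧ down (.inl g) = i) ∨
    (depth (.inr (g * c i)) ≠ 0 ∧ down (.inr (g * c i)) = i)

namespace Descent

variable (D : Descent c U S)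

/-- For `v` of depth `n`, the path that reaches `v` at time `n` along the chain of its ancestors,
passing at time `m` through the ancestor of depth `m`. -/
noncomputable def ray : ℕ → G ⊕ G → ℝ → CayleyGraph c
  | 0, v, _ => seg c v (D.down v) 0
  | n + 1, v, h => if h ≤ n then ray n (neighbor c v (D.down v)) h else
      seg c v (D.down v) (projIcc 0 1 zero_le_one (n + 1 - h))

lemma ray_of_le {n : ℕ} (v : G ⊕ G) {h : ℝ} (hn : n ≤ h) :
    D.ray n v h = seg c v (D.down v) 0 := by
  cases n with
  | zero => rfl
  | succ n =>
    push_cast at hn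
    rw [ray, if_neg (by linarith), projIcc_of_le_left _ (by linarith)]
    rfl

lemma ray_succ_of_le {n : ℕ} (v : G ⊕ G) {h : ℝ} (hn : h ≤ n) :
    D.ray (n + 1) v h = D.ray n (neighbor c v (D.down v)) h :=
  if_pos hn

lemma ray_succ_sub (n : ℕ) (v : G ⊕ G) (a : I) :
    D.ray (n + 1) v ((n + 1 : ℕ) - a) = seg c v (D.down v) a := by
  rcases eq_or_ne a 1 with rfl | ha
  · rw [ray_succ_of_le _ _ (by simp), ray_of_le _ _ (by simp), ← seg_one]
  · have : (a : ℝ) < 1 := unitInterval.lt_one_iff_ne_one.mpr ha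
    rw [ray, if_neg (by push_cast; linarith)]
    push_cast
    rw [sub_sub_cancel, projIcc_val]

lemma continuous_ray (n : ℕ) (v : G ⊕ G) : Continuous (D.ray n v) := by
  induction n generalizing v with
  | zero => exact continuous_const
  | succ n ih =>
    refine Continuous.if_le (ih _) ((seg c v (D.down v)).continuous.comp
      (continuous_projIcc.comp (by fun_prop))) continuous_id continuous_const ?_
    rintro _ rfl
    rw [ray_of_le _ _ le_rfl, projIcc_of_right_le _ (by simp)]
    exact (seg_one _ _ _).symm

lemma ray_smul {u : G} (hu : u ∈ U) (n : ℕ) (v : G ⊕ G) (h : ℝ) :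
    D.ray n (u • v) h = u • D.ray n v h := by
  induction n generalizing v with
  | zero => simp only [ray, D.down_smul u hu, seg_smul]
  | succ n ih =>
    simp only [ray, D.down_smul u hu, seg_smul, neighbor_smul, ih]
    split_ifs <;> rfl

lemma ray_zero_mem {n : ℕ} (v : G ⊕ G) (hv : D.depth v = n) :
    D.ray n v 0 ∈ subgraph c U S := by
  induction n generalizing v with
  | zero =>
    have hvU := (D.depth_eq_zero v).mp hv
    have hS := D.down_mem v hv
    cases v with
    | inl g => exact edge_mem_subgraph hvU hS 0
    | inr g => exact edge_mem_subgraph (U.mul_mem hvU (U.inv_mem (D.gen_mem _ hS))) hS _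
  | succ n ih =>
    rw [ray_succ_of_le _ _ (Nat.cast_nonneg n)]
    exact ih _ (by have := D.depth_neighbor v (by omega); omega)

/-- The track of the point at distance `a` from `v` towards its parent, under the contraction
moving each point along its ray with constant speed during the unit time. -/
noncomputable def track (v : G ⊕ G) : C(I, C(I, CayleyGraph c)) :=
  ContinuousMap.curry ⟨fun x => D.ray (D.depth v) v ((1 - x.2) * (D.depth v - x.1)),
    (D.continuous_ray _ _).comp (by fun_prop)⟩

lemma track_apply (v : G ⊕ G) (a t : I) :
    D.track v a t = D.ray (D.depth v) v ((1 - t) * (D.depth v - a)) :=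
  rfl

lemma track_one {v : G ⊕ G} (hv : D.depth v ≠ 0) :
    D.track v 1 = D.track (neighbor c v (D.down v)) 0 := by
  ext t
  have hd := D.depth_neighbor v hv
  rw [track_apply, track_apply, hd, ray_succ_of_le]
  · simp
  · push_cast
    simpa using mul_le_of_le_one_left (Nat.cast_nonneg (α := ℝ) _) (unitInterval.one_minus_le_one t)

lemma track_zero_eq_const {v : G ⊕ G} (hv : D.depth v = 0) (i : ι) :
    D.track v 0 = .const I (seg c v i 0) := by
  ext t
  rw [track_apply, hv]
  exact seg_zero _ _ _

lemma track_apply_zero {v : G ⊕ G} (hv : D.depth v ≠ 0) (a : I) :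
    D.track v a 0 = seg c v (D.down v) a := by
  obtain ⟨n, hn⟩ := Nat.exists_eq_succ_of_ne_zero hv
  rw [track_apply, hn, ← D.ray_succ_sub n v a]
  simp

lemma track_apply_one_mem (v : G ⊕ G) (a : I) : D.track v a 1 ∈ subgraph c U S := by
  simpa [track_apply] using D.ray_zero_mem v rfl

lemma track_smul {u : G} (hu : u ∈ U) (v : G ⊕ G) (a t : I) :
    D.track (u • v) a t = u • D.track v a t := by
  simp only [track_apply, D.depth_smul u hu, D.ray_smul hu]

open Classical in
/-- The tracks of the points of an edge. -/
noncomputable def edgeTrack (g : G) (i : ι) : C(I, C(I, CayleyGraph c)) :=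
  if g ∈ U ∧ i ∈ S then ⟨fun a => .const I (edge c g i a),
    ContinuousMap.continuous_const'.comp (edge c g i).continuous⟩
  else if D.depth (.inl g) ≠ 0 ∧ D.down (.inl g) = i then D.track (.inl g)
  else (D.track (.inr (g * c i))).comp ⟨σ, unitInterval.continuous_symm⟩

lemma edgeTrack_cases {p : C(I, C(I, CayleyGraph c)) → Prop} (g : G) (i : ι)
    (const : g ∈ U → i ∈ S → p ⟨fun a => .const I (edge c g i a),
      ContinuousMap.continuous_const'.comp (edge c g i).continuous⟩)
    (inl : D.depth (.inl g) ≠ 0 → D.down (.inl g) = i → p (D.track (.inl g)))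
    (inr : D.depth (.inr (g * c i)) ≠ 0 → D.down (.inr (g * c i)) = i →
      p ((D.track (.inr (g * c i))).comp ⟨σ, unitInterval.continuous_symm⟩)) :
    p (D.edgeTrack g i) := by
  have := D.edge_cases g i
  rw [edgeTrack]
  split_ifs with h₁ h₂
  · exact const h₁.1 h₁.2
  · exact inl h₂.1 h₂.2
  · have h₃ := (this.resolve_left h₁).resolve_left h₂
    exact inr h₃.1 h₃.2

lemma edgeTrack_zero (g : G) (i : ι) : D.edgeTrack g i 0 = D.track (.inl g) 0 := by
  refine D.edgeTrack_cases (p := fun q => q 0 = _) g i (fun hg _ => ?_) (fun _ _ => rfl)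
    (fun hd hi => ?_)
  · exact (D.track_zero_eq_const ((D.depth_eq_zero (.inl g)).mpr hg) i).symm
  · refine (congrArg (D.track _) unitInterval.symm_zero).trans ((D.track_one hd).trans ?_)
    simp [hi, neighbor]

lemma edgeTrack_one (g : G) (i : ι) : D.edgeTrack g i 1 = D.track (.inr (g * c i)) 0 := by
  refine D.edgeTrack_cases (p := fun q => q 1 = _) g i (fun hg hi => ?_) (fun hd hi => ?_)
    (fun _ _ => congrArg (D.track _) unitInterval.symm_one)
  · have hgi : g * c i ∈ U := U.mul_mem hg (D.gen_mem i hi)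
    refine Eq.trans ?_ (D.track_zero_eq_const ((D.depth_eq_zero (.inr _)).mpr hgi) i).symm
    exact congrArg (ContinuousMap.const I) (seg_one (.inl g) i i)
  · rw [D.track_one hd, hi, neighbor]

/-- The contraction of the bipartite Cayley graph onto the subgraph along the rays. -/
noncomputable def contraction : C(CayleyGraph c, C(I, CayleyGraph c)) :=
  lift D.edgeTrack (fun g => D.track (.inl g) 0) (fun g => D.track (.inr g) 0)
    D.edgeTrack_zero D.edgeTrack_one

lemma contraction_edge (g : G) (i : ι) (a : I) :
    D.contraction (edge c g i a) = D.edgeTrack g i a :=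
  rfl

theorem contraction_zero (e : CayleyGraph c) : D.contraction e 0 = e := by
  induction e using edge_induction with | h g i a
  refine D.edgeTrack_cases (p := fun q => q a 0 = _) g i (fun _ _ => rfl) (fun hd hi => ?_)
    (fun hd hi => ?_)
  · exact (D.track_apply_zero hd a).trans (by rw [hi]; rfl)
  · refine (D.track_apply_zero hd (σ a)).trans ?_
    simp [hi, seg]

theorem contraction_one_mem (e : CayleyGraph c) : D.contraction e 1 ∈ subgraph c U S := by
  induction e using edge_induction with | h g i a
  exact D.edgeTrack_cases (p := fun q => q a 1 ∈ _) g i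
    (fun hg hi => edge_mem_subgraph hg hi a) (fun _ _ => D.track_apply_one_mem _ _)
    (fun _ _ => D.track_apply_one_mem _ _)

theorem contraction_of_mem {e : CayleyGraph c} (he : e ∈ subgraph c U S) (t : I) :
    D.contraction e t = e := by
  obtain ⟨g, hg, i, hi, a, rfl⟩ := he
  rw [contraction_edge, edgeTrack, if_pos ⟨hg, hi⟩]
  rfl

theorem contraction_smul {u : G} (hu : u ∈ U) (e : CayleyGraph c) (t : I) :
    D.contraction (u • e) t = u • D.contraction e t := by
  induction e using edge_induction with | h g i a
  have hmul : Sum.inr (u * g * c i) = u • (Sum.inr (g * c i) : G ⊕ G) :=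
    congrArg Sum.inr (mul_assoc u g (c i))
  have hinl : Sum.inl (u * g) = u • (Sum.inl g : G ⊕ G) := rfl
  rw [smul_edge, contraction_edge, contraction_edge, edgeTrack, edgeTrack,
    U.mul_mem_cancel_left hu, hmul, hinl, D.depth_smul u hu, D.down_smul u hu]
  split_ifs
  · rfl
  · exact D.track_smul hu _ _ _
  · exact D.track_smul hu _ _ _

end Descent

end Contraction

end CayleyGraph

end CayleyGraph

section Sanov

/-- The Sanov subgroup of `SL(2, ℤ)`; it is free on the matrices `[1, 2; 0, 1]` and
`[1, 0; 2, 1]`, the inverses of the entries of `gen`. -/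
def sanovSubgroup : Subgroup (Matrix.SpecialLinearGroup (Fin 2) ℤ) where
  carrier := {A | A 0 0 ≡ 1 [ZMOD 4] ∧ A 1 1 ≡ 1 [ZMOD 4] ∧ 2 ∣ A 0 1 ∧ 2 ∣ A 1 0}
  one_mem' := by simp
  mul_mem' := by
    rintro A B ⟨hA₁, hA₂, hA₃, hA₄⟩ ⟨hB₁, hB₂, hB₃, hB₄⟩
    have h₁ : (4 : ℤ) ∣ A 0 1 * B 1 0 := mul_dvd_mul hA₃ hB₄
    have h₂ : (4 : ℤ) ∣ A 1 0 * B 0 1 := mul_dvd_mul hA₄ hB₃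
    simp only [mem_ofPred_eq, Matrix.SpecialLinearGroup.coe_mul, Matrix.mul_apply,
      Fin.sum_univ_two]
    exact ⟨(hA₁.mul hB₁).add (Int.modEq_zero_iff_dvd.mpr h₁),
      (Int.modEq_zero_iff_dvd.mpr h₂).add (hA₂.mul hB₂),
      (hB₃.mul_left _).add (hA₃.mul_right _), (hA₄.mul_right _).add (hB₄.mul_left _)⟩
  inv_mem' := by
    rintro A ⟨h₁, h₂, h₃, h₄⟩
    simpa [Matrix.adjugate_fin_two] using ⟨h₂, h₁, h₃, h₄⟩

/-- The Sanov group, the deck group of the covering of the theta graph by its universal cover. -/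
abbrev Sanov : Type := sanovSubgroup

namespace Sanov

/-- The upper left entry. -/
def ul (g : Sanov) : ℤ := g.1 0 0

/-- The upper right entry. -/
def ur (g : Sanov) : ℤ := g.1 0 1

/-- The lower left entry. -/
def ll (g : Sanov) : ℤ := g.1 1 0

/-- The lower right entry. -/
def lr (g : Sanov) : ℤ := g.1 1 1

variable (g h : Sanov)

@[simp] lemma ul_mul : ul (g * h) = ul g * ul h + ur g * ll h := by
  simp [ul, ur, ll, Matrix.mul_apply]

@[simp] lemma ur_mul : ur (g * h) = ul g * ur h + ur g * lr h := by
  simp [ul, ur, lr, Matrix.mul_apply]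

@[simp] lemma ll_mul : ll (g * h) = ll g * ul h + lr g * ll h := by
  simp [ul, ll, lr, Matrix.mul_apply]

@[simp] lemma lr_mul : lr (g * h) = ll g * ur h + lr g * lr h := by
  simp [ur, ll, lr, Matrix.mul_apply]

@[simp] lemma ul_inv : ul g⁻¹ = lr g := by simp [ul, lr, Matrix.adjugate_fin_two]

@[simp] lemma ur_inv : ur g⁻¹ = -ur g := by simp [ur, Matrix.adjugate_fin_two]

@[simp] lemma ll_inv : ll g⁻¹ = -ll g := by simp [ll, Matrix.adjugate_fin_two]

@[simp] lemma lr_inv : lr g⁻¹ = ul g := by simp [ul, lr, Matrix.adjugate_fin_two]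

lemma det : ul g * lr g - ur g * ll g = 1 := (Matrix.det_fin_two _).symm.trans g.1.2

lemma ul_mod : ul g % 4 = 1 := g.2.1

lemma lr_mod : lr g % 4 = 1 := g.2.2.1

lemma even_ur : 2 ∣ ur g := g.2.2.2.1

lemma even_ll : 2 ∣ ll g := g.2.2.2.2

/-- The subgroup of upper triangular matrices in the Sanov group, which is infinite cyclic. -/
def upper : Subgroup Sanov where
  carrier := {g | ll g = 0}
  one_mem' := rfl
  mul_mem' {g h} hg hh := by simp_all
  inv_mem' {g} hg := by simp_all

variable {g h}

lemma mem_upper : g ∈ upper ↔ ll g = 0 := Iff.rfl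

lemma ul_eq_one_and_lr_eq_one (hg : g ∈ upper) : ul g = 1 ∧ lr g = 1 := by
  have hdet : ul g * lr g = 1 := by simpa [mem_upper.mp hg] using det g
  have hmod := ul_mod g
  rcases Int.mul_eq_one_iff_eq_one_or_neg_one.mp hdet with h | ⟨h, -⟩
  · exact h
  · omega

lemma ur_ne_zero (hg : g ∈ upper) (hne : g ≠ 1) : ur g ≠ 0 := by
  intro hur
  obtain ⟨hul, hlr⟩ := ul_eq_one_and_lr_eq_one hg
  refine hne (Subtype.ext (Matrix.SpecialLinearGroup.ext _ _ fun i j => ?_))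
  fin_cases i <;> fin_cases j
  exacts [hul, hur, mem_upper.mp hg, hlr]

lemma trace_conj (u g : Sanov) :
    ul (u⁻¹ * g * u) + lr (u⁻¹ * g * u) = ul g + lr g := by
  simp only [ul_mul, ur_mul, ll_mul, lr_mul, ul_inv, ur_inv, ll_inv, lr_inv]
  linear_combination (ul g + lr g) * det u

lemma mem_upper_of_conj_mem {u : Sanov} (hg : g ∈ upper) (hne : g ≠ 1)
    (h : u⁻¹ * g * u ∈ upper) : u ∈ upper := by
  obtain ⟨hul, hlr⟩ := ul_eq_one_and_lr_eq_one hg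
  have hll : -(ur g * (ll u * ll u)) = 0 := by
    have := mem_upper.mp h
    simp only [ll_mul, lr_mul, ll_inv, lr_inv, hul, hlr, mem_upper.mp hg] at this
    linear_combination this
  simpa [ur_ne_zero hg hne, ← mem_upper] using hll

/-- A conjugate of an upper triangular element has trace `2`, and for `t = tr w` the trace of
`w * k * w` is `t * (t + ur k * ll w) - 2`. Both factors being `2` modulo `4`, they are equal. -/
lemma mem_upper_of_conj_mul_mul_mem {w k u : Sanov} (hk : k ∈ upper) (hne : k ≠ 1)
    (h : u⁻¹ * (w * k * w) * u ∈ upper) : w ∈ upper := by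
  obtain ⟨hkul, hklr⟩ := ul_eq_one_and_lr_eq_one hk
  have htrace : (ul w + lr w) * (ul w + lr w + ur k * ll w) = 4 := by
    have htr := trace_conj u (w * k * w)
    rw [(ul_eq_one_and_lr_eq_one h).1, (ul_eq_one_and_lr_eq_one h).2] at htr
    simp only [ul_mul, ur_mul, ll_mul, lr_mul, hkul, hklr, mem_upper.mp hk] at htr
    linear_combination 2 * det w - htr
  obtain ⟨a, ha⟩ : ∃ a, ul w + lr w = 4 * a + 2 :=
    ⟨(ul w + lr w) / 4, by have := ul_mod w; have := lr_mod w; omega⟩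
  obtain ⟨b, hb⟩ : (4 : ℤ) ∣ ur k * ll w := mul_dvd_mul (even_ur k) (even_ll w)
  rw [ha, hb] at htrace
  have hunits : (2 * a + 1) * (2 * a + 1 + 2 * b) = 1 := by linarith
  have hprod : ur k * ll w = 0 := by
    rcases Int.mul_eq_one_iff_eq_one_or_neg_one.mp hunits with ⟨h₁, h₂⟩ | ⟨h₁, h₂⟩ <;> omega
  exact (mul_eq_zero.mp hprod).resolve_left (ur_ne_zero hk hne)

/-- The labels of the edges of the bipartite Cayley graph, which is a tree for this choice. -/
def gen : Fin 3 → Sanov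
  | 0 => 1
  | 1 => ⟨⟨!![1, -2; 0, 1], by simp [Matrix.det_fin_two]⟩, by refine ⟨?_, ?_, ?_, ?_⟩ <;> decide⟩
  | 2 => ⟨⟨!![1, 0; -2, 1], by simp [Matrix.det_fin_two]⟩, by refine ⟨?_, ?_, ?_, ?_⟩ <;> decide⟩

lemma gen_mem_upper : ∀ i ∈ ({0, 1} : Set (Fin 3)), gen i ∈ upper := by
  rintro i (rfl | rfl) <;> rfl

/-- The lower row of a vertex of the bipartite Cayley graph, with the sign of its first entry
changed at the black vertices. -/
def row : Sanov ⊕ Sanov → ℤ × ℤ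
  | .inl g => (ll g, lr g)
  | .inr g => (-ll g, lr g)

/-- The involution of `ℤ²` that describes the effect of an edge with label `i` on rows. -/
def reflect (i : Fin 3) (x : ℤ × ℤ) : ℤ × ℤ :=
  match i with
  | 0 => (-x.1, x.2)
  | 1 => (-x.1, x.2 - 2 * x.1)
  | 2 => (2 * x.2 - x.1, x.2)

lemma row_neighbor (v : Sanov ⊕ Sanov) (i : Fin 3) :
    row (CayleyGraph.neighbor gen v i) = reflect i (row v) := by
  have hgen : (ul (gen 1), ur (gen 1), ll (gen 1), lr (gen 1)) = (1, -2, 0, 1) ∧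
      (ul (gen 2), ur (gen 2), ll (gen 2), lr (gen 2)) = (1, 0, -2, 1) := ⟨rfl, rfl⟩
  simp only [Prod.mk.injEq] at hgen
  rcases v with g | g <;> fin_cases i <;>
    simp [CayleyGraph.neighbor, row, reflect, hgen, show gen 0 = 1 from rfl] <;> ring

lemma row_smul {u : Sanov} (hu : u ∈ upper) (v : Sanov ⊕ Sanov) : row (u • v) = row v := by
  have hu' := mem_upper.mp hu
  cases v <;> simp [row, hu', (ul_eq_one_and_lr_eq_one hu).2]

lemma row_fst_eq_zero (v : Sanov ⊕ Sanov) : (row v).1 = 0 ↔ v.elim id id ∈ upper := by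
  cases v <;> simp [row, mem_upper]

lemma even_row_fst (v : Sanov ⊕ Sanov) : 2 ∣ (row v).1 := by
  cases v <;> simp [row, even_ll]

lemma odd_row_snd (v : Sanov ⊕ Sanov) : (row v).2 % 2 = 1 := by
  rcases v with g | g <;> have := lr_mod g <;> simp only [row] <;> omega

/-- The size of a row, which decreases along the edge towards the parent. -/
def rowNorm (x : ℤ × ℤ) : ℕ := x.1.natAbs + x.2.natAbs + (x.2 - x.1).natAbs

/-- The label of the edge towards the parent of a vertex with the given row. -/
def rowDown (x : ℤ × ℤ) : Fin 3 :=
  if 0 < x.1 ∧ 0 < x.2 ∨ x.1 < 0 ∧ x.2 < 0 then if x.2.natAbs < x.1.natAbs then 2 else 1 else 0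

lemma rowNorm_reflect_lt_iff {x : ℤ × ℤ} (h₁ : 2 ∣ x.1) (h₂ : x.2 % 2 = 1) :
    rowNorm (reflect (rowDown x) x) < rowNorm x ↔ x.1 ≠ 0 := by
  unfold rowDown rowNorm
  split_ifs <;> simp only [reflect] <;> omega

lemma rowDown_cases {x : ℤ × ℤ} (h₁ : 2 ∣ x.1) (h₂ : x.2 % 2 = 1) (i : Fin 3) :
    (x.1 = 0 ∧ i ∈ ({0, 1} : Set (Fin 3))) ∨ (x.1 ≠ 0 ∧ rowDown x = i) ∨
      ((reflect i x).1 ≠ 0 ∧ rowDown (reflect i x) = i) := by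
  unfold rowDown
  fin_cases i <;> simp only [reflect, mem_insert_iff, mem_singleton_iff, Fin.zero_eta, Fin.mk_one,
    Fin.reduceFinMk, Fin.reduceEq] <;> grind

/-- The number of steps along `rowDown` that decrease the norm. -/
def rowDepth (x : ℤ × ℤ) : ℕ :=
  if rowNorm (reflect (rowDown x) x) < rowNorm x then rowDepth (reflect (rowDown x) x) + 1 else 0
termination_by rowNorm x

lemma rowDepth_row (v : Sanov ⊕ Sanov) : rowDepth (row v) =
    if (row v).1 ≠ 0 then
      rowDepth (row (CayleyGraph.neighbor gen v (rowDown (row v)))) + 1 else 0 := by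
  rw [rowDepth, row_neighbor]
  simp only [rowNorm_reflect_lt_iff (even_row_fst v) (odd_row_snd v)]

lemma rowDepth_row_eq_zero (v : Sanov ⊕ Sanov) : rowDepth (row v) = 0 ↔ (row v).1 = 0 := by
  rw [rowDepth_row]
  split_ifs <;> simp_all

/-- The bipartite Cayley graph of `gen` is the line spanned by the upper triangular matrices and the
labels `0` and `1`, with trees attached. -/
def descent : CayleyGraph.Descent gen upper {0, 1} where
  depth v := rowDepth (row v)
  down v := rowDown (row v)
  depth_smul u hu v := by rw [row_smul hu]
  down_smul u hu v := by rw [row_smul hu]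
  gen_mem := gen_mem_upper
  down_mem v hv := by
    rw [rowDepth_row_eq_zero] at hv
    simp [rowDown, hv]
  depth_eq_zero v := (rowDepth_row_eq_zero v).trans (row_fst_eq_zero v)
  depth_neighbor v hv := by
    rw [Ne, rowDepth_row_eq_zero] at hv
    rw [rowDepth_row, if_pos hv]
  edge_cases g i := by
    simp only [ne_eq, rowDepth_row_eq_zero]
    have := rowDown_cases (even_row_fst (.inl g)) (odd_row_snd (.inl g)) i
    rwa [← row_neighbor] at this

end Sanov

end Sanov

section Theta

open CayleyGraph Sanov

/-- The theta graph: two vertices joined by three edges. -/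
abbrev Theta : Type := OrbitSpace gen

namespace Theta

/-- The edges of the theta graph, from the white to the black vertex, extended by constants beyond
the unit interval. -/
noncomputable def arc (i : Fin 3) : C(ℝ, Theta) :=
  (proj gen).comp ((edge gen 1 i).comp clamp)

/-- The circle in the theta graph that consists of the edges `0` and `1`. -/
abbrev circle : Set Theta := orbitSubgraph gen {0, 1}

/-- The lift of the circle to the universal cover through the white vertex `1`. -/
abbrev line : Set (CayleyGraph gen) := subgraph gen upper {0, 1}

lemma proj_edge (g : Sanov) (i : Fin 3) (a : I) : proj gen (edge gen g i a) = arc i a := by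
  rw [← mul_one g, ← smul_edge, proj_smul, arc]
  simp

lemma arc_zero (i j : Fin 3) : arc i 0 = arc j 0 := by
  simpa [proj_edge] using congrArg (proj gen) (edge_zero (c := gen) 1 i j)

lemma arc_one (i j : Fin 3) : arc i 1 = arc j 1 := by
  simpa [proj_edge] using congrArg (proj gen)
    (edge_one (c := gen) (g := (gen i)⁻¹) (h := (gen j)⁻¹) (i := i) (j := j) (by simp))

lemma arc_mem_circle {i : Fin 3} (hi : i ∈ ({0, 1} : Set (Fin 3))) (a : ℝ) : arc i a ∈ circle :=
  ⟨i, hi, _, rfl⟩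

lemma arc_eq_arc {x : ℝ} (hx : x = 0 ∨ x = 1) (i j : Fin 3) : arc i x = arc j x := by
  rcases hx with rfl | rfl
  exacts [arc_zero i j, arc_one i j]

lemma continuous_arc_ite {Y : Type*} [TopologicalSpace Y] {f g a : Y → ℝ} {i : Fin 3}
    {j : Y → Fin 3} (hf : Continuous f) (hg : Continuous g) (ha : Continuous a)
    (hj : Continuous fun y => arc (j y) (a y)) (h : ∀ y, f y = g y → a y = 0 ∨ a y = 1) :
    Continuous fun y => arc (if f y ≤ g y then i else j y) (a y) := by
  refine (Continuous.if_le ((map_continuous (arc i)).comp ha) hj hf hg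
    fun y hy => arc_eq_arc (h y hy) i (j y)).congr fun y => ?_
  split_ifs <;> rfl

lemma arc_eq_of_sin_eq_zero {x : ℝ} (hx : Real.sin x = 0) (i j : Fin 3) :
    arc i (Real.arccos (Real.cos x) / π) = arc j (Real.arccos (Real.cos x) / π) := by
  refine arc_eq_arc ?_ i j
  rcases Real.sin_eq_zero_iff_cos_eq.mp hx with h | h <;> simp [h, Real.pi_ne_zero]

/-- The map that winds the real line around the circle, with white vertex at the even integers and
black vertex at the odd integers. -/
noncomputable def loop : C(ℝ, Theta) where
  toFun x := if 0 ≤ Real.sin (π * x) then arc 0 (Real.arccos (Real.cos (π * x)) / π)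
    else arc 1 (Real.arccos (Real.cos (π * x)) / π)
  continuous_toFun := by
    refine Continuous.if_le (by fun_prop) (by fun_prop) continuous_const (by fun_prop) ?_
    exact fun x hx => arc_eq_of_sin_eq_zero hx.symm 0 1

lemma loop_mem_circle (x : ℝ) : loop x ∈ circle := by
  change ite _ _ _ ∈ circle
  split_ifs <;> exact arc_mem_circle (by simp) _

lemma loop_add_even {q : ℤ} (hq : 2 ∣ q) (x : ℝ) : loop (q + x) = loop x := by
  obtain ⟨n, rfl⟩ := hq
  have h : π * ((2 * n : ℤ) + x) = π * x + n * (2 * π) := by push_cast; ring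
  simp only [loop, ContinuousMap.coe_mk, h, Real.sin_add_int_mul_two_pi,
    Real.cos_add_int_mul_two_pi]

lemma loop_coe (a : I) : loop a = arc 0 a := by
  have hpos : 0 ≤ π * a := mul_nonneg Real.pi_pos.le a.2.1
  have hle : π * a ≤ π := mul_le_of_le_one_right Real.pi_pos.le a.2.2
  simp only [loop, ContinuousMap.coe_mk, if_pos (Real.sin_nonneg_of_nonneg_of_le_pi hpos hle),
    Real.arccos_cos hpos hle, mul_div_cancel_left₀ _ Real.pi_ne_zero]

lemma loop_neg_coe (a : I) : loop (-a) = arc 1 a := by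
  have hpos : 0 ≤ π * a := mul_nonneg Real.pi_pos.le a.2.1
  have hle : π * a ≤ π := mul_le_of_le_one_right Real.pi_pos.le a.2.2
  have harccos : Real.arccos (Real.cos (π * a)) / π = a := by
    rw [Real.arccos_cos hpos hle, mul_div_cancel_left₀ _ Real.pi_ne_zero]
  simp only [loop, ContinuousMap.coe_mk, mul_neg, Real.sin_neg, Real.cos_neg, harccos]
  refine ite_eq_right_iff.mpr fun h => ?_
  have hsin := Real.sin_nonneg_of_nonneg_of_le_pi hpos hle
  rw [← harccos]
  exact arc_eq_of_sin_eq_zero (by linarith) 0 1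

/-- The coordinate along the line: a vertex is sent to its upper right entry, increased by one
at the black vertices. -/
noncomputable def position : C(CayleyGraph gen, ℝ) :=
  interpolate (fun g => (ur g : ℝ)) (fun g => (ur g : ℝ) + 1)

lemma loop_position {e : CayleyGraph gen} (he : e ∈ line) : loop (position e) = proj gen e := by
  obtain ⟨g, hg, i, hi, a, rfl⟩ := he
  obtain ⟨hul, -⟩ := ul_eq_one_and_lr_eq_one hg
  rw [proj_edge, position, interpolate_edge]
  rcases hi with rfl | rfl
  · rw [← loop_coe, ← loop_add_even (even_ur g) a, show gen 0 = 1 from rfl, mul_one]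
    exact congrArg loop (by ring)
  · have hur : ur (g * gen 1) = ur g - 2 := by
      rw [ur_mul, hul, show ur (gen 1) = -2 from rfl, show lr (gen 1) = 1 from rfl]
      ring
    rw [← loop_neg_coe, ← loop_add_even (even_ur g) (-a), hur]
    exact congrArg loop (by push_cast; ring)

theorem exists_comp_arc_eq {Z : Type*} [TopologicalSpace Z] (A : Fin 3 → C(ℝ, Z))
    (h₀ : ∀ i j, A i 0 = A j 0) (h₁ : ∀ i j, A i 1 = A j 1) :
    ∃ ψ : C(Theta, Z), ∀ i, ∀ a : I, ψ (arc i a) = A i a := by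
  let Ψ : C(CayleyGraph gen, Z) := lift (fun _ i => (A i).comp ⟨(↑), continuous_subtype_val⟩)
    (fun _ => A 0 0) (fun _ => A 0 1) (fun _ i => h₀ i 0) (fun _ i => h₁ i 0)
  have hΨ : ∀ e e', MulAction.orbitRel Sanov (CayleyGraph gen) e e' → Ψ e = Ψ e' := by
    rintro _ e ⟨g, rfl⟩
    induction e using edge_induction with | h h i a
    rfl
  refine ⟨⟨Quotient.lift Ψ hΨ, Ψ.continuous.quotient_lift hΨ⟩, fun i a => ?_⟩
  rw [← proj_edge 1 i a]
  rfl

end Theta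

end Theta

section Polar

section Quotient

/-- The square of side two minus two of its sides: an embedding of the Möbius band into `ℝ⁴`, in
coordinates of the square. -/
def sqEmbedding (p : Sq) : ℝ × ℝ × ℝ × ℝ :=
  let x := (p : ℝ × ℝ).1
  let y := (p : ℝ × ℝ).2
  (x * (1 - x), x * (1 - x) * (1 - 2 * x), y * (1 - 2 * x), y * (x * (1 - x)))

lemma sqEmbedding_eq_iff {p q : Sq} : sqEmbedding p = sqEmbedding q ↔ rel p q := by
  obtain ⟨⟨x, y⟩, hp⟩ := p
  obtain ⟨⟨x', y'⟩, hq⟩ := q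
  simp only [sqEmbedding, rel, Prod.mk.injEq]
  constructor
  · rintro ⟨h₁, h₂, h₃, h₄⟩
    have hx : (x' - x) * (x' - (1 - x)) = 0 := by linear_combination h₁
    rcases mul_eq_zero.mp hx with hx | hx
    · obtain rfl : x' = x := by linarith
      exact .inl ⟨rfl, by linear_combination (1 - 2 * x') * h₃ + 4 * h₄⟩
    · obtain rfl : x' = 1 - x := by linarith
      by_cases hmid : 1 - 2 * x = 0
      · exact .inl ⟨by linarith, by linear_combination 4 * h₄ + (1 - 2 * x) * (y - y') * hmid⟩
      · have hy : y = -y' := mul_right_cancel₀ hmid (by linear_combination h₃)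
        have hx0 : x * (1 - x) = 0 := mul_right_cancel₀ hmid (by linear_combination h₂ / 2)
        rcases mul_eq_zero.mp hx0 with hx | hx
        · exact .inr (.inl ⟨hx, by linarith, hy⟩)
        · exact .inr (.inr ⟨by linarith, by linarith, by linarith⟩)
  · rintro (⟨rfl, rfl⟩ | ⟨rfl, rfl, rfl⟩ | ⟨rfl, rfl, rfl⟩) <;> norm_num

lemma qm_eq_iff {p q : Sq} : qm p = qm q ↔ rel p q := by
  refine ⟨fun h => sqEmbedding_eq_iff.mp ?_, Quot.sound⟩
  exact congrArg (Quot.lift sqEmbedding fun _ _ => sqEmbedding_eq_iff.mpr) h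

lemma continuous_qm : Continuous qm := continuous_quot_mk

instance : T2Space M := by
  refine T2Space.of_injective_continuous
    (f := Quot.lift sqEmbedding fun _ _ => sqEmbedding_eq_iff.mpr) ?_
    (continuous_quot_lift _ (by unfold sqEmbedding; fun_prop))
  rintro ⟨p⟩ ⟨q⟩ h
  exact Quot.sound (sqEmbedding_eq_iff.mp h)

end Quotient

/-- The radial coordinate on the square around the removed disc, normalised to be `0` on the inner
and `1` on the outer boundary. -/
noncomputable def radius (p : ℝ × ℝ) : ℝ := max (4 * |p.1 - 1 / 2| - 1) ((4 * |p.2| - 1) / 3)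

lemma dist_center (p : ℝ × ℝ) : dist p (1 / 2, 0) = max |p.1 - 1 / 2| |p.2| := by
  simp [Prod.dist_eq, Real.dist_eq]

lemma mem_Bdisc_iff {p : ℝ × ℝ} : p ∈ Bdisc ↔ radius p < 0 := by
  rw [Bdisc, Metric.mem_ball, dist_center, radius, max_lt_iff, max_lt_iff]
  constructor <;> rintro ⟨h₁, h₂⟩ <;> constructor <;> linarith

lemma mem_Scirc_iff {p : ℝ × ℝ} : p ∈ Scirc ↔ radius p = 0 := by
  rw [Scirc, Metric.mem_sphere, dist_center, radius, max_eq_iff, max_eq_iff]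
  constructor <;> rintro (⟨h₁, h₂⟩ | ⟨h₁, h₂⟩) <;> first
    | exact .inl ⟨by linarith, by linarith⟩
    | exact .inr ⟨by linarith, by linarith⟩

lemma radius_le_one {p : ℝ × ℝ} (hp : p ∈ Sq) : radius p ≤ 1 := by
  obtain ⟨⟨h₁, h₂⟩, h₃⟩ := hp
  have hx : |p.1 - 1 / 2| ≤ 1 / 2 := abs_le.mpr ⟨by linarith, by linarith⟩
  have hy : |p.2| ≤ 1 := abs_le.mpr h₃
  exact max_le (by linarith) (by linarith)

lemma radius_eq_of_rel {p q : Sq} (h : rel p q) : radius p = radius q := by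
  rcases h with h | ⟨hp, hq, h⟩ | ⟨hp, hq, h⟩
  · rw [h]
  all_goals
    rw [radius, radius, hp, hq, h, abs_neg]
    norm_num [abs_of_pos]

/-- The direction of a nonzero vector, normalised in the sup norm. The value at `0` is a dummy unit
vector, which makes `polar` a total function. -/
noncomputable def dir (v : ℝ × ℝ) : ℝ × ℝ := if v = 0 then (1, 0) else ‖v‖⁻¹ • v

lemma dir_of_ne {v : ℝ × ℝ} (hv : v ≠ 0) : dir v = ‖v‖⁻¹ • v := if_neg hv

lemma norm_eq_max_abs (v : ℝ × ℝ) : ‖v‖ = max |v.1| |v.2| := rfl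

lemma norm_dir (v : ℝ × ℝ) : ‖dir v‖ = 1 := by
  unfold dir
  split_ifs with hv
  · simp
  · rw [norm_smul, norm_inv, norm_norm, inv_mul_cancel₀ (norm_ne_zero_iff.mpr hv)]

lemma abs_fst_le_norm (v : ℝ × ℝ) : |v.1| ≤ ‖v‖ := le_max_left _ _

lemma abs_snd_le_norm (v : ℝ × ℝ) : |v.2| ≤ ‖v‖ := le_max_right _ _

/-- The point of the square with given direction from its centre and given radial coordinate. -/
noncomputable def collarPoint (n : ℝ × ℝ) (s : ℝ) : ℝ × ℝ :=
  (1 / 2 + n.1 * (1 + s) / 4, n.2 * (1 + 3 * s) / 4)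

lemma radius_collarPoint {n : ℝ × ℝ} (hn : ‖n‖ = 1) {s : ℝ} (hs : 0 ≤ s) :
    radius (collarPoint n s) = s := by
  have hx : 4 * |(collarPoint n s).1 - 1 / 2| - 1 = |n.1| * (1 + s) - 1 := by
    rw [collarPoint, add_sub_cancel_left, abs_div, abs_mul, abs_of_nonneg (by linarith : 0 ≤ 1 + s),
      Nat.abs_ofNat]
    ring
  have hy : (4 * |(collarPoint n s).2| - 1) / 3 = (|n.2| * (1 + 3 * s) - 1) / 3 := by
    rw [collarPoint, abs_div, abs_mul, abs_of_nonneg (by linarith : 0 ≤ 1 + 3 * s),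
      Nat.abs_ofNat]
    ring
  have h₁ := hn ▸ abs_fst_le_norm n
  have h₂ := hn ▸ abs_snd_le_norm n
  rw [radius, hx, hy, max_eq_iff]
  rcases max_eq_iff.mp ((norm_eq_max_abs n).symm.trans hn) with ⟨h, -⟩ | ⟨h, -⟩
  · exact .inl ⟨by rw [h]; ring, by nlinarith⟩
  · exact .inr ⟨by rw [h]; ring, by nlinarith⟩

lemma collarPoint_mem_Sq {n : ℝ × ℝ} (hn : ‖n‖ = 1) (s : I) : collarPoint n s ∈ Sq := by
  have h₁ := abs_le.mp (hn ▸ abs_fst_le_norm n)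
  have h₂ := abs_le.mp (hn ▸ abs_snd_le_norm n)
  have hs := s.2
  refine ⟨⟨?_, ?_⟩, ?_, ?_⟩ <;> simp only [collarPoint] <;> nlinarith [hs.1, hs.2]

lemma collarPoint_mem_Xset {n : ℝ × ℝ} (hn : ‖n‖ = 1) (s : I) :
    qm ⟨collarPoint n s, collarPoint_mem_Sq hn s⟩ ∈ Xset := by
  rintro ⟨p, hp, h⟩
  have hr := radius_eq_of_rel (qm_eq_iff.mp h)
  rw [radius_collarPoint hn s.2.1] at hr
  exact (mem_Bdisc_iff.mp hp).not_ge (hr ▸ s.2.1)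

lemma exists_collarPoint {p : ℝ × ℝ} (hp : p ∈ Sq) (hr : 0 ≤ radius p) :
    ∃ n, ‖n‖ = 1 ∧ ∃ s : I, collarPoint n s = p := by
  obtain ⟨r, hrad⟩ : ∃ r, radius p = r := ⟨_, rfl⟩
  have hr₁ : r ≤ 1 := hrad ▸ radius_le_one hp
  rw [hrad] at hr
  have h₁ : 0 < 1 + r := by linarith
  have h₂ : 0 < 1 + 3 * r := by linarith
  refine ⟨(4 * (p.1 - 1 / 2) / (1 + r), 4 * p.2 / (1 + 3 * r)), ?_, ⟨r, hr, hr₁⟩, ?_⟩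
  · rw [norm_eq_max_abs, abs_div, abs_div, abs_mul, abs_mul, abs_of_pos h₁, abs_of_pos h₂,
      abs_of_pos (zero_lt_four' ℝ), max_eq_iff, div_eq_one_iff_eq h₁.ne', div_eq_one_iff_eq h₂.ne']
    rcases max_eq_iff.mp hrad with ⟨hx, hy⟩ | ⟨hy, hx⟩
    · refine .inl ⟨by linarith, ?_⟩
      rw [div_le_div_iff₀ h₂ h₁]
      nlinarith
    · refine .inr ⟨by linarith, ?_⟩
      rw [div_le_div_iff₀ h₁ h₂]
      nlinarith
  · ext <;> simp only [collarPoint] <;> field_simp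
    ring

lemma rel_collarPoint_iff {n m : ℝ × ℝ} (hn : ‖n‖ = 1) (hm : ‖m‖ = 1) {s t : I} :
    rel ⟨collarPoint n s, collarPoint_mem_Sq hn s⟩ ⟨collarPoint m t, collarPoint_mem_Sq hm t⟩ ↔
      s = t ∧ (n = m ∨ s = 1 ∧ |n.2| ≤ |n.1| ∧ -n = m) := by
  constructor
  · intro h
    have hst := radius_eq_of_rel h
    rw [radius_collarPoint hn s.2.1, radius_collarPoint hm t.2.1] at hst
    obtain rfl := Subtype.ext hst
    refine ⟨rfl, ?_⟩
    have h₁ := abs_le.mp (hn ▸ abs_fst_le_norm n)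
    have h₂ := hn ▸ abs_snd_le_norm n
    have h₁' := abs_le.mp (hm ▸ abs_fst_le_norm m)
    have hs := s.2
    simp only [rel, collarPoint, Prod.mk.injEq] at h
    rcases h with ⟨hx, hy⟩ | ⟨hx, hx', hy⟩ | ⟨hx, hx', hy⟩
    · left
      ext
      · exact mul_right_cancel₀ (by linarith [hs.1] : 1 + (s : ℝ) ≠ 0) (by linarith)
      · exact mul_right_cancel₀ (by linarith [hs.1] : 1 + 3 * (s : ℝ) ≠ 0) (by linarith)
    all_goals
      right
      have hs₁ : (s : ℝ) = 1 := by nlinarith [hs.1, hs.2]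
      rw [hs₁] at hx hx' hy
      refine ⟨Subtype.ext hs₁, ?_, Prod.ext ?_ ?_⟩
      · rwa [abs_eq_abs.mpr (by first | exact .inl (by linarith) | exact .inr (by linarith) :
          n.1 = 1 ∨ n.1 = -1), abs_one]
      all_goals simp only [Prod.fst_neg, Prod.snd_neg]; linarith
  · rintro ⟨rfl, rfl | ⟨rfl, hle, rfl⟩⟩
    · exact .inl rfl
    · have hone : |n.1| = 1 := by rw [← hn, norm_eq_max_abs, max_eq_left hle]
      right
      simp only [collarPoint, Prod.fst_neg, Prod.snd_neg, Icc.coe_one]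
      rcases eq_or_eq_neg_of_abs_eq hone with h | h <;> rw [h] <;> norm_num <;> ring

/-- Polar coordinates on the punctured Möbius band: the point in the direction `v` with radial
coordinate `s`. -/
noncomputable def polar (v : ℝ × ℝ) (s : I) : X :=
  ⟨_, collarPoint_mem_Xset (norm_dir v) s⟩

lemma continuous_polar {α : Type*} [TopologicalSpace α] {v : α → ℝ × ℝ} {s : α → I}
    (hv : Continuous v) (hs : Continuous s) (hne : ∀ a, v a ≠ 0) :
    Continuous fun a => polar (v a) (s a) := by
  have hdir : Continuous fun a => dir (v a) := by
    simp only [dir_of_ne (hne _)]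
    exact (hv.norm.inv₀ fun a => norm_ne_zero_iff.mpr (hne a)).smul hv
  refine (continuous_qm.comp (Continuous.subtype_mk (?_ : Continuous fun a =>
    collarPoint (dir (v a)) (s a)) _)).subtype_mk _
  unfold collarPoint
  fun_prop

lemma exists_polar (x : X) : ∃ v, ‖v‖ = 1 ∧ ∃ s, polar v s = x := by
  obtain ⟨⟨p⟩, hx⟩ := x
  have hr : 0 ≤ radius p := by
    by_contra h
    exact hx ⟨p, mem_Bdisc_iff.mpr (not_le.mp h), rfl⟩
  obtain ⟨n, hn, s, hp⟩ := exists_collarPoint p.2 hr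
  have hdir : dir n = n := by
    rw [dir_of_ne (norm_ne_zero_iff.mp (hn ▸ one_ne_zero)), hn, inv_one, one_smul]
  exact ⟨n, hn, s, Subtype.ext (congrArg qm (Subtype.ext (by simpa only [hdir] using hp)))⟩

lemma dir_eq_iff {v w : ℝ × ℝ} (hv : v ≠ 0) (hw : w ≠ 0) : dir v = dir w ↔ SameRay ℝ v w := by
  rw [dir_of_ne hv, dir_of_ne hw, sameRay_iff_inv_norm_smul_eq_of_ne hv hw]

lemma dir_neg {v : ℝ × ℝ} (hv : v ≠ 0) : dir (-v) = -dir v := by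
  rw [dir_of_ne hv, dir_of_ne (neg_ne_zero.mpr hv), norm_neg, smul_neg]

lemma abs_snd_dir_le_iff {v : ℝ × ℝ} (hv : v ≠ 0) :
    |(dir v).2| ≤ |(dir v).1| ↔ |v.2| ≤ |v.1| := by
  have : 0 < ‖v‖⁻¹ := inv_pos.mpr (norm_pos_iff.mpr hv)
  simp [dir_of_ne hv, abs_mul, hv]

lemma abs_fst_dir_le_iff {v : ℝ × ℝ} (hv : v ≠ 0) :
    |(dir v).1| ≤ |(dir v).2| ↔ |v.1| ≤ |v.2| := by
  have : 0 < ‖v‖⁻¹ := inv_pos.mpr (norm_pos_iff.mpr hv)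
  simp [dir_of_ne hv, abs_mul, hv]

theorem polar_eq_polar_iff {v w : ℝ × ℝ} (hv : v ≠ 0) (hw : w ≠ 0) {s t : I} :
    polar v s = polar w t ↔ s = t ∧
      (SameRay ℝ v w ∨ s = 1 ∧ |v.2| ≤ |v.1| ∧ SameRay ℝ (-v) w) := by
  rw [← dir_eq_iff hv hw, ← dir_eq_iff (neg_ne_zero.mpr hv) hw, dir_neg hv, ← abs_snd_dir_le_iff hv,
    ← rel_collarPoint_iff (norm_dir v) (norm_dir w), ← qm_eq_iff]
  exact Subtype.ext_iff

lemma polar_mem_C2_iff {v : ℝ × ℝ} {s : I} : polar v s ∈ C2 ↔ s = 0 := by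
  have hrad := radius_collarPoint (norm_dir v) s.2.1
  constructor
  · rintro ⟨p, hp, hS⟩
    rw [mem_Scirc_iff, radius_eq_of_rel (qm_eq_iff.mp hp), hrad] at hS
    exact Subtype.ext hS
  · rintro rfl
    exact ⟨_, rfl, mem_Scirc_iff.mpr hrad⟩

lemma abs_snd_eq_of_rel {p q : Sq} (h : rel p q) : |(p : ℝ × ℝ).2| = |(q : ℝ × ℝ).2| := by
  rcases h with h | ⟨-, -, h⟩ | ⟨-, -, h⟩ <;> simp only [h, abs_neg]

lemma polar_mem_C1_iff {v : ℝ × ℝ} (hv : v ≠ 0) {s : I} :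
    polar v s ∈ C1 ↔ s = 1 ∧ |v.1| ≤ |v.2| := by
  have hs := s.2
  have hsnd : |(collarPoint (dir v) s).2| = |(dir v).2| * (1 + 3 * s) / 4 := by
    rw [collarPoint, abs_div, abs_mul, abs_of_pos (zero_lt_four' ℝ),
      abs_of_nonneg (by linarith [hs.1] : 0 ≤ 1 + 3 * (s : ℝ))]
  have h₁ : |(dir v).1| ≤ 1 := norm_dir v ▸ abs_fst_le_norm (dir v)
  have h₂ : |(dir v).2| ≤ 1 := norm_dir v ▸ abs_snd_le_norm (dir v)
  rw [← abs_fst_dir_le_iff hv]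
  constructor
  · rintro ⟨p, hp, hone⟩
    rw [← abs_eq zero_le_one, abs_snd_eq_of_rel (qm_eq_iff.mp hp), hsnd] at hone
    have hs₁ : (s : ℝ) = 1 := by nlinarith [hs.1, hs.2]
    rw [hs₁] at hone
    exact ⟨Subtype.ext hs₁, by linarith⟩
  · rintro ⟨rfl, hle⟩
    have hone : |(dir v).2| = 1 := by
      rw [← norm_dir v, norm_eq_max_abs, max_eq_right hle]
    refine ⟨_, rfl, (abs_eq zero_le_one).mp ?_⟩
    rw [hsnd, hone]
    norm_num

lemma polar_congr {v w : ℝ × ℝ} (hv : v ≠ 0) (hw : w ≠ 0) (h : SameRay ℝ v w) (s : I) :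
    polar v s = polar w s :=
  (polar_eq_polar_iff hv hw).mpr ⟨rfl, .inl h⟩

lemma polar_neg_one {v : ℝ × ℝ} (hv : v ≠ 0) (h : |v.2| ≤ |v.1|) : polar (-v) 1 = polar v 1 :=
  ((polar_eq_polar_iff hv (neg_ne_zero.mpr hv)).mpr ⟨rfl, .inr ⟨rfl, h, SameRay.rfl⟩⟩).symm

lemma polar_smul {v : ℝ × ℝ} (hv : v ≠ 0) {r : ℝ} (hr : 0 < r) (s : I) :
    polar (r • v) s = polar v s :=
  polar_congr (smul_ne_zero hr.ne' hv) hv (SameRay.sameRay_pos_smul_left v hr) s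

end Polar

section Band

lemma isQuotientMap_of_isCompact {A B : Type*} [TopologicalSpace A] [TopologicalSpace B] [T2Space B]
    {f : A → B} (hf : Continuous f) {K : Set A} (hK : IsCompact K) (h : SurjOn f K univ) :
    Topology.IsQuotientMap f := by
  have := isCompact_iff_compactSpace.mp hK
  have hfK : Continuous (K.domRestrict f) := hf.comp continuous_subtype_val
  have hsurj : Function.Surjective (K.domRestrict f) := fun b => by
    obtain ⟨a, ha, rfl⟩ := h (mem_univ b)
    exact ⟨⟨a, ha⟩, rfl⟩
  exact .of_comp continuous_subtype_val hf (hfK.isClosedMap.isQuotientMap hfK hsurj)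

/-- The point of the unit circle with angle `θ`. -/
noncomputable def circlePoint : C(ℝ, ℝ × ℝ) := ⟨fun θ => (Real.cos θ, Real.sin θ), by fun_prop⟩

@[simp] lemma circlePoint_fst (θ : ℝ) : (circlePoint θ).1 = Real.cos θ := rfl

@[simp] lemma circlePoint_snd (θ : ℝ) : (circlePoint θ).2 = Real.sin θ := rfl

lemma circlePoint_ne_zero (θ : ℝ) : circlePoint θ ≠ 0 := fun h => by
  have h₁ : Real.cos θ = 0 := congrArg Prod.fst h
  have h₂ : Real.sin θ = 0 := congrArg Prod.snd h
  simpa [h₁, h₂] using Real.sin_sq_add_cos_sq θ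

lemma circlePoint_periodic : Function.Periodic circlePoint (2 * π) := fun θ =>
  Prod.ext (Real.cos_add_two_pi θ) (Real.sin_add_two_pi θ)

lemma circlePoint_add_pi (θ : ℝ) : circlePoint (θ + π) = -circlePoint θ :=
  Prod.ext (Real.cos_add_pi θ) (Real.sin_add_pi θ)

lemma sameRay_circlePoint_iff {θ θ' : ℝ} :
    SameRay ℝ (circlePoint θ) (circlePoint θ') ↔ ∃ n : ℤ, θ' = θ + n * (2 * π) := by
  constructor
  · intro h
    obtain ⟨r, hr, h⟩ := h.exists_pos_left (circlePoint_ne_zero θ) (circlePoint_ne_zero θ')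
    have hcos : r * Real.cos θ = Real.cos θ' := congrArg Prod.fst h
    have hsin : r * Real.sin θ = Real.sin θ' := congrArg Prod.snd h
    obtain rfl : r = 1 := by
      refine (pow_eq_one_iff_of_nonneg hr.le two_ne_zero).mp ?_
      rw [← Real.sin_sq_add_cos_sq θ', ← hcos, ← hsin, mul_pow, mul_pow, ← mul_add,
        Real.sin_sq_add_cos_sq, mul_one]
    rw [one_mul] at hcos hsin
    obtain ⟨n, hn⟩ := Real.Angle.angle_eq_iff_two_pi_dvd_sub.mp
      (Real.Angle.cos_sin_inj hcos.symm hsin.symm)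
    exact ⟨n, by linear_combination hn⟩
  · rintro ⟨n, rfl⟩
    rw [circlePoint_periodic.int_mul n θ]

lemma exists_sameRay_circlePoint {v : ℝ × ℝ} (hv : v ≠ 0) :
    ∃ θ ∈ Icc (-π) π, SameRay ℝ (circlePoint θ) v := by
  let z : ℂ := ⟨v.1, v.2⟩
  have hz : z ≠ 0 := fun h => hv (Prod.ext (congrArg Complex.re h) (congrArg Complex.im h))
  refine ⟨z.arg, ⟨(Complex.neg_pi_lt_arg z).le, Complex.arg_le_pi z⟩, ?_⟩
  have h : circlePoint z.arg = ‖z‖⁻¹ • v := by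
    ext
    · simp [Complex.cos_arg hz, z, div_eq_inv_mul]
    · simp [Complex.sin_arg, z, div_eq_inv_mul]
  exact h ▸ SameRay.sameRay_nonneg_smul_left v (by positivity)

/-- Polar coordinates on the punctured Möbius band by angle and radial coordinate; the angle is
taken in the universal cover of the circle of directions. -/
noncomputable def band : C(ℝ × I, X) where
  toFun x := polar (circlePoint x.1) x.2
  continuous_toFun := continuous_polar (by fun_prop) (by fun_prop) fun _ => circlePoint_ne_zero _

lemma band_apply (θ : ℝ) (s : I) : band (θ, s) = polar (circlePoint θ) s := rfl

lemma exists_band (x : X) : ∃ θ ∈ Icc (-π) π, ∃ s, band (θ, s) = x := by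
  obtain ⟨v, hv, s, rfl⟩ := exists_polar x
  have hne : v ≠ 0 := norm_ne_zero_iff.mp (hv ▸ one_ne_zero)
  obtain ⟨θ, hθ, h⟩ := exists_sameRay_circlePoint hne
  exact ⟨θ, hθ, s, (polar_eq_polar_iff (circlePoint_ne_zero θ) hne).mpr ⟨rfl, .inl h⟩⟩

lemma band_eq_band_iff {θ θ' : ℝ} {s s' : I} :
    band (θ, s) = band (θ', s') ↔ s = s' ∧ ((∃ n : ℤ, θ' = θ + n * (2 * π)) ∨
      s = 1 ∧ |Real.sin θ| ≤ |Real.cos θ| ∧ ∃ n : ℤ, θ' = θ + π + n * (2 * π)) := by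
  rw [band_apply, band_apply, polar_eq_polar_iff (circlePoint_ne_zero θ) (circlePoint_ne_zero θ'),
    ← circlePoint_add_pi, sameRay_circlePoint_iff, sameRay_circlePoint_iff]
  rfl

lemma isQuotientMap_band : Topology.IsQuotientMap band := by
  refine isQuotientMap_of_isCompact (map_continuous band)
    (isCompact_Icc.prod isCompact_univ : IsCompact (Icc (-π) π ×ˢ (univ : Set I))) fun x _ => ?_
  obtain ⟨θ, hθ, s, rfl⟩ := exists_band x
  exact ⟨(θ, s), ⟨hθ, mem_univ s⟩, rfl⟩

lemma abs_sin_le_abs_cos_iff (θ : ℝ) : |Real.sin θ| ≤ |Real.cos θ| ↔ 0 ≤ Real.cos (2 * θ) := by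
  rw [← sq_le_sq, Real.cos_two_mul, ← Real.sin_sq_add_cos_sq θ]
  constructor <;> intro h <;> nlinarith [Real.sin_sq_add_cos_sq θ]

lemma abs_sin_le_cos {θ : ℝ} (hθ : θ ∈ Icc (-(π / 4)) (π / 4)) :
    0 < Real.cos θ ∧ |Real.sin θ| ≤ Real.cos θ := by
  have hpi := Real.pi_pos
  obtain ⟨h₁, h₂⟩ := hθ
  have hpos : 0 < Real.cos θ := Real.cos_pos_of_mem_Ioo ⟨by linarith, by linarith⟩
  refine ⟨hpos, ?_⟩
  rw [← abs_of_pos hpos, abs_sin_le_abs_cos_iff]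
  exact Real.cos_nonneg_of_neg_pi_div_two_le_of_le (by linarith) (by linarith)

lemma mem_Icc_or_of_abs_sin_le_abs_cos {θ : ℝ} (hθ : θ ∈ Ico (-(π / 4)) (-(π / 4) + 2 * π))
    (h : |Real.sin θ| ≤ |Real.cos θ|) :
    θ ∈ Icc (-(π / 4)) (π / 4) ∨ θ - π ∈ Icc (-(π / 4)) (π / 4) := by
  rw [abs_sin_le_abs_cos_iff] at h
  by_contra! hcon
  simp only [mem_Icc, not_and_or, not_le] at hcon
  rcases lt_or_ge (θ - π) (-(π / 4)) with hlt | hge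
  · exact h.not_gt (Real.cos_neg_of_pi_div_two_lt_of_lt (by grind) (by grind))
  · rw [← Real.cos_sub_two_pi] at h
    exact h.not_gt (Real.cos_neg_of_pi_div_two_lt_of_lt (by grind) (by grind))

lemma apply_add_pi_of_abs_sin_le_abs_cos {Y : Type*} {G : ℝ → Y}
    (hper : Function.Periodic G (2 * π)) (hG : ∀ θ ∈ Icc (-(π / 4)) (π / 4), G (θ + π) = G θ)
    {θ : ℝ} (hθ : |Real.sin θ| ≤ |Real.cos θ|) : G (θ + π) = G θ := by
  obtain ⟨n, hn, -⟩ := existsUnique_add_zsmul_mem_Ico Real.two_pi_pos θ (-(π / 4))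
  rw [zsmul_eq_mul] at hn
  have hshift : G (θ + n * (2 * π)) = G θ := hper.int_mul n θ
  have hshift_pi : G (θ + n * (2 * π) + π) = G (θ + π) := by
    rw [add_right_comm]
    exact hper.int_mul n (θ + π)
  rw [← Real.sin_add_int_mul_two_pi θ n, ← Real.cos_add_int_mul_two_pi θ n] at hθ
  rw [← hshift_pi, ← hshift]
  rcases mem_Icc_or_of_abs_sin_le_abs_cos hn hθ with h | h
  · exact hG _ h
  · have := hG _ h
    rw [sub_add_cancel] at this
    rw [this, ← hper (_ - π)]
    exact congrArg G (by ring)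

theorem exists_comp_band_eq {Z : Type*} [TopologicalSpace Z] (Φ : C(ℝ × I, Z))
    (hper : ∀ θ s, Φ (θ + 2 * π, s) = Φ (θ, s))
    (hanti : ∀ θ ∈ Icc (-(π / 4)) (π / 4), Φ (θ + π, 1) = Φ (θ, 1)) :
    ∃ φ : C(X, Z), ∀ x, φ (band x) = Φ x := by
  have hfac : Function.FactorsThrough Φ band := by
    rintro ⟨θ, s⟩ ⟨θ', s'⟩ h
    have hperiodic : ∀ n : ℤ, ∀ θ, Φ (θ + n * (2 * π), s) = Φ (θ, s) := fun n =>
      (show Function.Periodic (fun θ => Φ (θ, s)) (2 * π) from (hper · s)).int_mul n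
    rcases band_eq_band_iff.mp h with ⟨rfl, ⟨n, rfl⟩ | ⟨rfl, hle, n, rfl⟩⟩
    · exact (hperiodic n θ).symm
    · rw [hperiodic]
      exact (apply_add_pi_of_abs_sin_le_abs_cos (G := fun θ => Φ (θ, 1)) (hper · 1) hanti hle).symm
  exact ⟨isQuotientMap_band.lift Φ hfac, DFunLike.congr_fun (isQuotientMap_band.lift_comp Φ hfac)⟩

theorem exists_homotopy_comp_band_eq {Z : Type*} [TopologicalSpace Z] (Φ : C((ℝ × I) × I, Z))
    (hper : ∀ θ s t, Φ ((θ + 2 * π, s), t) = Φ ((θ, s), t))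
    (hanti : ∀ θ ∈ Icc (-(π / 4)) (π / 4), ∀ t, Φ ((θ + π, 1), t) = Φ ((θ, 1), t)) :
    ∃ H : C(I × X, Z), ∀ x t, H (t, band x) = Φ (x, t) := by
  obtain ⟨φ, hφ⟩ := exists_comp_band_eq Φ.curry
    (fun θ s => ContinuousMap.ext (hper θ s)) fun θ hθ => ContinuousMap.ext (hanti θ hθ)
  exact ⟨φ.uncurry.comp .prodSwap, fun x t => DFunLike.congr_fun (hφ x) t⟩

lemma band_add_two_pi (θ : ℝ) (s : I) : band (θ + 2 * π, s) = band (θ, s) := by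
  rw [band_apply, circlePoint_periodic, band_apply]

lemma band_zero_mem_C2 (θ : ℝ) : band (θ, 0) ∈ C2 := polar_mem_C2_iff.mpr rfl

lemma band_add_pi {θ : ℝ} (hθ : |Real.sin θ| ≤ |Real.cos θ|) : band (θ + π, 1) = band (θ, 1) :=
  (band_eq_band_iff.mpr ⟨rfl, .inr ⟨rfl, hθ, 0, by simp⟩⟩).symm

/-- The angles at which the ray from the centre of the square leaves it through the upper side. -/
abbrev upperAngles : Set ℝ := Icc (π / 4) (3 * π / 4)

lemma abs_cos_le_abs_sin {θ : ℝ} (hθ : θ ∈ upperAngles) : |Real.cos θ| ≤ |Real.sin θ| := by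
  have h := abs_sin_le_cos (θ := θ - π / 2) ⟨by linarith [hθ.1], by linarith [hθ.2]⟩
  rw [Real.sin_sub_pi_div_two, Real.cos_sub_pi_div_two, abs_neg] at h
  exact h.2.trans (le_abs_self _)

lemma band_mem_C1_iff {θ : ℝ} {s : I} : band (θ, s) ∈ C1 ↔ s = 1 ∧ |Real.cos θ| ≤ |Real.sin θ| :=
  polar_mem_C1_iff (circlePoint_ne_zero θ)

lemma band_mem_C1 {θ : ℝ} (hθ : θ ∈ upperAngles) : band (θ, 1) ∈ C1 :=
  band_mem_C1_iff.mpr ⟨rfl, abs_cos_le_abs_sin hθ⟩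

lemma band_add_pi_mem_C1 {θ : ℝ} (hθ : θ ∈ upperAngles) : band (θ + π, 1) ∈ C1 :=
  band_mem_C1_iff.mpr
    ⟨rfl, by simpa only [Real.cos_add_pi, Real.sin_add_pi, abs_neg] using abs_cos_le_abs_sin hθ⟩

lemma eq_of_mem_upperAngles {θ θ' : ℝ} (hθ : θ ∈ upperAngles) (hθ' : θ' ∈ upperAngles) {m : ℤ}
    (h : θ' = θ + m * π) : θ = θ' ∧ m = 0 := by
  have hpi := Real.pi_pos
  have hlt : (m : ℝ) < 1 := by by_contra! hm; nlinarith [hθ.1, hθ'.2]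
  have hgt : (-1 : ℝ) < m := by by_contra! hm; nlinarith [hθ.2, hθ'.1]
  obtain rfl : m = 0 := by
    have : m < 1 := by exact_mod_cast hlt
    have : -1 < m := by exact_mod_cast hgt
    omega
  exact ⟨by simpa using h.symm, rfl⟩

lemma band_injOn_upperAngles {θ θ' : ℝ} (hθ : θ ∈ upperAngles) (hθ' : θ' ∈ upperAngles)
    (h : band (θ, 1) = band (θ', 1)) : θ = θ' := by
  rcases (band_eq_band_iff.mp h).2 with ⟨n, hn⟩ | ⟨-, -, n, hn⟩
  · exact (eq_of_mem_upperAngles hθ hθ' (m := 2 * n) (by push_cast; linarith)).1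
  · exact (eq_of_mem_upperAngles hθ hθ' (m := 2 * n + 1) (by push_cast; linarith)).1

lemma band_add_pi_injOn_upperAngles {θ θ' : ℝ} (hθ : θ ∈ upperAngles) (hθ' : θ' ∈ upperAngles)
    (h : band (θ + π, 1) = band (θ' + π, 1)) : θ = θ' := by
  rcases (band_eq_band_iff.mp h).2 with ⟨n, hn⟩ | ⟨-, -, n, hn⟩
  · exact (eq_of_mem_upperAngles hθ hθ' (m := 2 * n) (by push_cast; linarith)).1
  · exact (eq_of_mem_upperAngles hθ hθ' (m := 2 * n + 1) (by push_cast; linarith)).1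

lemma eq_of_band_eq_band_add_pi {θ θ' : ℝ} (hθ : θ ∈ upperAngles) (hθ' : θ' ∈ upperAngles)
    (h : band (θ, 1) = band (θ' + π, 1)) : θ = θ' ∧ (θ = π / 4 ∨ θ = 3 * π / 4) := by
  rcases (band_eq_band_iff.mp h).2 with ⟨n, hn⟩ | ⟨-, hle, n, hn⟩
  · have := (eq_of_mem_upperAngles hθ hθ' (m := 2 * n - 1) (by push_cast; linarith)).2
    omega
  · refine ⟨(eq_of_mem_upperAngles hθ hθ' (m := 2 * n) (by push_cast; linarith)).1, ?_⟩
    obtain ⟨h₁, h₂⟩ := hθ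
    have hpi := Real.pi_pos
    rcases mem_Icc_or_of_abs_sin_le_abs_cos ⟨by linarith, by linarith⟩ hle with h | h
    · exact .inl (h.2.antisymm h₁)
    · exact .inr (by linarith [h.1])

lemma exists_add_int_mul_mem_upperAngles {θ : ℝ} (h : |Real.cos θ| ≤ |Real.sin θ|) :
    ∃ n : ℤ, θ + n * (2 * π) ∈ upperAngles ∨ θ + n * (2 * π) - π ∈ upperAngles := by
  obtain ⟨n, hn, -⟩ := existsUnique_add_zsmul_mem_Ico Real.two_pi_pos (θ - π / 2) (-(π / 4))
  rw [zsmul_eq_mul, sub_add_eq_add_sub] at hn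
  have hle : |Real.sin (θ + n * (2 * π) - π / 2)| ≤ |Real.cos (θ + n * (2 * π) - π / 2)| := by
    rwa [Real.sin_sub_pi_div_two, Real.cos_sub_pi_div_two, abs_neg, Real.sin_add_int_mul_two_pi,
      Real.cos_add_int_mul_two_pi]
  refine ⟨n, (mem_Icc_or_of_abs_sin_le_abs_cos hn hle).imp ?_ ?_⟩ <;>
    exact fun hmem => ⟨by linarith [hmem.1], by linarith [hmem.2]⟩

/-- The parametrization of `C1` by its two arcs on the upper and the lower side of the square. -/
noncomputable def outerArcs : C(upperAngles ⊕ upperAngles, C1) where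
  toFun := Sum.elim (fun θ => ⟨band (θ, 1), band_mem_C1 θ.2⟩)
    fun θ => ⟨band (θ + π, 1), band_add_pi_mem_C1 θ.2⟩
  continuous_toFun := continuous_sumElim.mpr ⟨by fun_prop, by fun_prop⟩

lemma isQuotientMap_outerArcs : Topology.IsQuotientMap outerArcs := by
  refine isQuotientMap_of_isCompact outerArcs.continuous isCompact_univ ?_
  rintro ⟨x, hx⟩ -
  obtain ⟨θ, -, s, rfl⟩ := exists_band x
  obtain ⟨rfl, hle⟩ := band_mem_C1_iff.mp hx
  obtain ⟨n, hn⟩ := exists_add_int_mul_mem_upperAngles hle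
  have hband : band (θ + n * (2 * π), 1) = band (θ, 1) :=
    (band_eq_band_iff.mpr ⟨rfl, .inl ⟨n, rfl⟩⟩).symm
  rcases hn with hn | hn
  · exact ⟨.inl ⟨_, hn⟩, mem_univ _, Subtype.ext hband⟩
  · exact ⟨.inr ⟨_, hn⟩, mem_univ _, Subtype.ext (by simpa [outerArcs] using hband)⟩

end Band

section Domination

open Theta

/-- The pair `(A, C)` is a homotopy retract of the pair `(B, D)`: some self-map of `A` that factors
through `B` is homotopic to the identity, all as maps of pairs. -/
def PairDominated {A B : Type*} [TopologicalSpace A] [TopologicalSpace B] (C : Set A) (D : Set B) :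
    Prop :=
  ∃ (φ : C(A, B)) (ψ : C(B, A)) (H : (ContinuousMap.id A).Homotopy (ψ.comp φ)),
    MapsTo φ C D ∧ MapsTo ψ D C ∧ ∀ t, MapsTo (fun x => H (t, x)) C C

/-- A deformation of `X` onto a spine made of three arcs with common ends, in polar coordinates:
`(v, s)` moves along `motion v s` to the point `coord v s` of the arc `index v s`. The circle `C`
stays invariant and contains the arcs `0` and `1`. The fields `place_neg` and `motion_neg` express
compatibility with the identification of antipodal directions on the sides of the square. -/
structure SpineDeformation (C : Set X) where
  spine : Fin 3 → C(ℝ, X)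
  spine_zero : ∀ i j, spine i 0 = spine j 0
  spine_one : ∀ i j, spine i 1 = spine j 1
  spine_mem : ∀ i ∈ ({0, 1} : Set (Fin 3)), ∀ a : I, spine i a ∈ C
  index : ℝ × ℝ → I → Fin 3
  coord : ℝ × ℝ → I → I
  motion : ℝ × ℝ → I → I → X
  continuous_place : Continuous fun x : ℝ × I =>
    arc (index (circlePoint x.1) x.2) (coord (circlePoint x.1) x.2)
  place_neg : ∀ v : ℝ × ℝ, 0 < v.1 → |v.2| ≤ v.1 →
    arc (index (-v) 1) (coord (-v) 1) = arc (index v 1) (coord v 1)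
  index_mem : ∀ v ≠ 0, ∀ s, polar v s ∈ C → index v s ∈ ({0, 1} : Set (Fin 3))
  continuous_motion : Continuous fun x : (ℝ × I) × I => motion (circlePoint x.1.1) x.1.2 x.2
  motion_neg : ∀ v : ℝ × ℝ, 0 < v.1 → |v.2| ≤ v.1 → ∀ t, motion (-v) 1 t = motion v 1 t
  motion_zero : ∀ v ≠ 0, ∀ s, motion v s 0 = polar v s
  motion_one : ∀ v ≠ 0, ∀ s, motion v s 1 = spine (index v s) (coord v s)
  motion_mem : ∀ v ≠ 0, ∀ s, polar v s ∈ C → ∀ t, motion v s t ∈ C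

theorem SpineDeformation.pairDominated {C : Set X} (D : SpineDeformation C) :
    PairDominated C circle := by
  obtain ⟨φ, hφ⟩ := exists_comp_band_eq ⟨_, D.continuous_place⟩
    (fun θ s => by simp only [ContinuousMap.coe_mk, circlePoint_periodic θ])
    (fun θ hθ => by
      simpa only [ContinuousMap.coe_mk, circlePoint_add_pi] using
        D.place_neg _ (abs_sin_le_cos hθ).1 (abs_sin_le_cos hθ).2)
  obtain ⟨H, hH⟩ := exists_homotopy_comp_band_eq ⟨_, D.continuous_motion⟩
    (fun θ s t => by simp only [ContinuousMap.coe_mk, circlePoint_periodic θ])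
    (fun θ hθ t => by
      simpa only [ContinuousMap.coe_mk, circlePoint_add_pi] using
        D.motion_neg _ (abs_sin_le_cos hθ).1 (abs_sin_le_cos hθ).2 t)
  obtain ⟨ψ, hψ⟩ := exists_comp_arc_eq D.spine D.spine_zero D.spine_one
  refine ⟨φ, ψ, ⟨H, fun x => ?_, fun x => ?_⟩, fun x hx => ?_, ?_, fun t x hx => ?_⟩
  case refine_4 =>
    rintro _ ⟨i, hi, a, rfl⟩
    rw [proj_edge, hψ]
    exact D.spine_mem i hi a
  all_goals obtain ⟨⟨θ, s⟩, rfl⟩ := isQuotientMap_band.surjective x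
  · exact (hH _ _).trans (D.motion_zero _ (circlePoint_ne_zero θ) s)
  · refine ((hH _ _).trans (D.motion_one _ (circlePoint_ne_zero θ) s)).trans ?_
    rw [ContinuousMap.comp_apply, hφ]
    exact (hψ _ _).symm
  · rw [hφ]
    exact arc_mem_circle (D.index_mem _ (circlePoint_ne_zero θ) s hx) _
  · exact (congrArg (· ∈ C) (hH (θ, s) t)).mpr (D.motion_mem _ (circlePoint_ne_zero θ) s hx t)

section Outer

/-- The spine of the deformation to the outer boundary: the upper side, the lower side and a
vertical side of the square. -/
noncomputable def outerSpine : Fin 3 → C(ℝ, X) := ![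
  ⟨fun a => polar (1 - 2 * a, 1) 1, continuous_polar (by fun_prop) (by fun_prop) (by simp)⟩,
  ⟨fun a => polar (2 * a - 1, -1) 1, continuous_polar (by fun_prop) (by fun_prop) (by simp)⟩,
  ⟨fun a => polar (-1, 2 * a - 1) 1, continuous_polar (by fun_prop) (by fun_prop) (by simp)⟩]

/-- The side of the square that the ray in direction `v` hits; the two vertical sides coincide. -/
noncomputable def outerIndex (v : ℝ × ℝ) : Fin 3 :=
  if |v.1| ≤ v.2 then 0 else if |v.1| ≤ -v.2 then 1 else 2

/-- The position on its side of the point of the square that the ray in direction `v` hits. The sign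
of `v.1 * v.2` makes opposite points of the vertical sides have the same position. -/
noncomputable def outerCoord (v : ℝ × ℝ) : I := clamp ((1 - v.1 * v.2 / ‖v‖ ^ 2) / 2)

lemma coe_outerCoord (v : ℝ × ℝ) : (outerCoord v : ℝ) = (1 - v.1 * v.2 / ‖v‖ ^ 2) / 2 := by
  have h : |v.1 * v.2 / ‖v‖ ^ 2| ≤ 1 := by
    rw [abs_div, abs_mul, abs_of_nonneg (sq_nonneg ‖v‖), sq]
    exact div_le_one_of_le₀ (mul_le_mul (abs_fst_le_norm v) (abs_snd_le_norm v) (abs_nonneg _)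
      (norm_nonneg _)) (by positivity)
  obtain ⟨h₁, h₂⟩ := abs_le.mp h
  exact coe_clamp ⟨by linarith, by linarith⟩

lemma outerCoord_neg (v : ℝ × ℝ) : outerCoord (-v) = outerCoord v := by
  simp [outerCoord]

lemma outerCoord_of_abs_eq {v : ℝ × ℝ} (hv : v ≠ 0) (h : |v.1| = |v.2|) :
    (outerCoord v : ℝ) = 0 ∨ (outerCoord v : ℝ) = 1 := by
  have hnorm : ‖v‖ ^ 2 = v.2 ^ 2 := by rw [norm_eq_max_abs, h, max_self, sq_abs]
  have hne : v.2 ≠ 0 := fun h₂ => hv (Prod.ext (by simpa [h₂] using h) h₂)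
  rw [coe_outerCoord, hnorm]
  rcases abs_eq_abs.mp h with h | h
  · left; rw [h]; field_simp; ring
  · right; rw [h]; field_simp; ring

lemma continuous_outerCoord : Continuous fun θ => outerCoord (circlePoint θ) := by
  have hne : ∀ θ, ‖circlePoint θ‖ ^ 2 ≠ 0 := fun θ =>
    pow_ne_zero 2 (norm_ne_zero_iff.mpr (circlePoint_ne_zero θ))
  unfold outerCoord
  fun_prop (disch := exact hne _)

lemma continuous_outerPlace :
    Continuous fun θ => arc (outerIndex (circlePoint θ)) (outerCoord (circlePoint θ)) := by
  have hcoord := continuous_subtype_val.comp continuous_outerCoord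
  refine continuous_arc_ite (by fun_prop) (by fun_prop) hcoord ?_ fun θ h =>
    outerCoord_of_abs_eq (circlePoint_ne_zero θ) (by rw [← abs_abs, h])
  refine continuous_arc_ite (by fun_prop) (by fun_prop) hcoord ?_ fun θ h =>
    outerCoord_of_abs_eq (circlePoint_ne_zero θ) (by rw [← abs_abs, h, abs_neg])
  exact (map_continuous (arc 2)).comp hcoord

lemma outerSpine_of_abs_fst_le_snd {v : ℝ × ℝ} (hv : v ≠ 0) (h : |v.1| ≤ v.2) :
    outerSpine 0 (outerCoord v) = polar v 1 := by
  have hne : v.2 ≠ 0 := fun h₂ => hv (Prod.ext (abs_nonpos_iff.mp (h₂ ▸ h)) h₂)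
  have hpos : 0 < v.2 := ((abs_nonneg _).trans h).lt_of_ne' hne
  have hnorm : ‖v‖ = v.2 := by rw [norm_eq_max_abs, abs_of_pos hpos, max_eq_right h]
  have hdir : (1 - 2 * (outerCoord v : ℝ), (1 : ℝ)) = v.2⁻¹ • v := by
    ext
    · simp only [coe_outerCoord, hnorm, Prod.smul_fst, smul_eq_mul]
      field_simp
      ring
    · exact (inv_mul_cancel₀ hne).symm
  exact (congrArg (polar · 1) hdir).trans (polar_smul hv (inv_pos.mpr hpos) 1)

lemma outerSpine_of_abs_fst_le_neg_snd {v : ℝ × ℝ} (hv : v ≠ 0) (h : |v.1| ≤ -v.2) :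
    outerSpine 1 (outerCoord v) = polar v 1 := by
  have hne : -v.2 ≠ 0 := fun h₂ =>
    hv (Prod.ext (abs_nonpos_iff.mp (h₂ ▸ h)) (neg_eq_zero.mp h₂))
  have hpos : 0 < -v.2 := ((abs_nonneg _).trans h).lt_of_ne' hne
  have hnorm : ‖v‖ = -v.2 := by
    rw [norm_eq_max_abs, abs_of_neg (neg_pos.mp hpos : v.2 < 0), max_eq_right h]
  have hdir : (2 * (outerCoord v : ℝ) - 1, (-1 : ℝ)) = (-v.2)⁻¹ • v := by
    have hne' : v.2 ≠ 0 := neg_ne_zero.mp hne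
    ext
    · simp only [coe_outerCoord, hnorm, Prod.smul_fst, smul_eq_mul]
      field_simp
      ring
    · simp only [Prod.smul_snd, smul_eq_mul]
      field_simp
  exact (congrArg (polar · 1) hdir).trans (polar_smul hv (inv_pos.mpr hpos) 1)

lemma outerSpine_of_abs_snd_le_abs_fst {v : ℝ × ℝ} (hv : v ≠ 0) (h : |v.2| ≤ |v.1|) :
    outerSpine 2 (outerCoord v) = polar v 1 := by
  have hne : v.1 ≠ 0 := fun h₁ =>
    hv (Prod.ext h₁ (abs_nonpos_iff.mp (by rwa [h₁, abs_zero] at h)))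
  have hnorm : ‖v‖ ^ 2 = v.1 ^ 2 := by rw [norm_eq_max_abs, max_eq_left h, sq_abs]
  have hdir : ((-1 : ℝ), 2 * (outerCoord v : ℝ) - 1) = (-v.1)⁻¹ • v := by
    ext
    · simp only [Prod.smul_fst, smul_eq_mul]
      field_simp
    · simp only [coe_outerCoord, hnorm, Prod.smul_snd, smul_eq_mul]
      field_simp
      ring
  refine (congrArg (polar · 1) hdir).trans ?_
  rcases lt_or_gt_of_ne hne with hlt | hgt
  · exact polar_smul hv (inv_pos.mpr (neg_pos.mpr hlt)) 1
  · rw [inv_neg, neg_smul, ← smul_neg, polar_smul (neg_ne_zero.mpr hv) (inv_pos.mpr hgt),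
      polar_neg_one hv h]

lemma outerSpine_outerIndex {v : ℝ × ℝ} (hv : v ≠ 0) :
    outerSpine (outerIndex v) (outerCoord v) = polar v 1 := by
  unfold outerIndex
  split_ifs with h₀ h₁
  · exact outerSpine_of_abs_fst_le_snd hv h₀
  · exact outerSpine_of_abs_fst_le_neg_snd hv h₁
  · exact outerSpine_of_abs_snd_le_abs_fst hv
      (abs_le.mpr ⟨by linarith [not_le.mp h₁], by linarith [not_le.mp h₀]⟩)

lemma outerSpine_zero (i : Fin 3) : outerSpine i 0 = polar (1, 1) 1 := by
  have h : polar (-1, -1) 1 = polar (1, 1) 1 := by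
    simpa using polar_neg_one (v := (1, 1)) (by simp) (by simp)
  fin_cases i <;> simp [outerSpine, h]

lemma outerSpine_one (i : Fin 3) : outerSpine i 1 = polar (1, -1) 1 := by
  have h : polar (-1, 1) 1 = polar (1, -1) 1 := by
    simpa using polar_neg_one (v := (1, -1)) (by simp) (by simp)
  fin_cases i <;> norm_num [outerSpine, h]

lemma outerSpine_mem_C1 {i : Fin 3} (hi : i ∈ ({0, 1} : Set (Fin 3))) (a : I) :
    outerSpine i a ∈ C1 := by
  obtain ⟨h₀, h₁⟩ := a.2
  rcases hi with rfl | rfl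
  all_goals
    refine (polar_mem_C1_iff (by simp)).mpr ⟨rfl, ?_⟩
    simp only [abs_one, abs_neg, abs_le]
    constructor <;> linarith

lemma arc_outerIndex_neg {v : ℝ × ℝ} (hpos : 0 < v.1) (hle : |v.2| ≤ v.1) :
    arc (outerIndex (-v)) (outerCoord (-v)) = arc (outerIndex v) (outerCoord v) := by
  rw [outerCoord_neg]
  rcases hle.lt_or_eq with hlt | heq
  · obtain ⟨h₁, h₂⟩ := abs_lt.mp hlt
    have hindex : ∀ w : ℝ × ℝ, |w.2| < |w.1| → outerIndex w = 2 := fun w h => by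
      obtain ⟨h₁, h₂⟩ := abs_lt.mp h
      rw [outerIndex, if_neg (by linarith), if_neg (by linarith)]
    rw [← abs_of_pos hpos] at hlt
    rw [hindex v hlt, hindex (-v) (by simpa using hlt)]
  · exact arc_eq_arc (outerCoord_of_abs_eq (fun h => hpos.ne' (congrArg Prod.fst h))
      (by rw [heq, abs_of_pos hpos])) _ _

lemma outerIndex_mem {v : ℝ × ℝ} (h : |v.1| ≤ |v.2|) :
    outerIndex v ∈ ({0, 1} : Set (Fin 3)) := by
  unfold outerIndex
  split_ifs with h₀ h₁
  · exact .inl rfl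
  · exact .inr rfl
  · rcases le_abs.mp h with h | h
    exacts [absurd h h₀, absurd h h₁]

/-- The deformation that pushes the punctured Möbius band radially onto the boundary of the
square. -/
noncomputable def outerDeformation : SpineDeformation C1 where
  spine := outerSpine
  spine_zero i j := (outerSpine_zero i).trans (outerSpine_zero j).symm
  spine_one i j := (outerSpine_one i).trans (outerSpine_one j).symm
  spine_mem _ hi := outerSpine_mem_C1 hi
  index v _ := outerIndex v
  coord v _ := outerCoord v
  motion v s t := polar v (clamp ((1 - t) * s + t))
  continuous_place := continuous_outerPlace.comp continuous_fst
  place_neg _ := arc_outerIndex_neg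
  index_mem _ hv _ hmem := outerIndex_mem ((polar_mem_C1_iff hv).mp hmem).2
  continuous_motion := continuous_polar (by fun_prop) (by fun_prop) fun _ => circlePoint_ne_zero _
  motion_neg v hpos hle t := by
    simpa [clamp_of_one_le] using
      polar_neg_one (fun h => hpos.ne' (congrArg Prod.fst h)) (hle.trans (le_abs_self _))
  motion_zero v _ s := by simp
  motion_one v hv s := by simp [outerSpine_outerIndex hv, clamp_of_one_le]
  motion_mem v hv s hmem t := by
    obtain ⟨rfl, hle⟩ := (polar_mem_C1_iff hv).mp hmem
    exact (polar_mem_C1_iff hv).mpr ⟨clamp_of_one_le (by simp), hle⟩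

end Outer

section Inner

lemma tent_ne_zero (x : ℝ) : (x, 1 - |x|) ≠ 0 := fun h => by
  obtain ⟨rfl, h⟩ := Prod.mk_eq_zero.mp h
  simp at h

lemma neg_tent_ne_zero (x : ℝ) : (x, -(1 - |x|)) ≠ 0 := fun h => by
  obtain ⟨rfl, h⟩ := Prod.mk_eq_zero.mp h
  simp at h

lemma polar_one_zero : polar (1, 0) 1 = polar (-1, 0) 1 := by
  simpa using (polar_neg_one (v := (1, 0)) (by simp) (by simp)).symm

/-- The spine of the deformation to the inner boundary: the two halves of the removed circle, cut at
its horizontal diameter, and the core of the Möbius band outside the disc. -/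
noncomputable def innerSpine : Fin 3 → C(ℝ, X) := ![
  ⟨fun a => polar (1 - 2 * a, 1 - |1 - 2 * a|) 0, continuous_polar (by fun_prop) (by fun_prop)
    fun a => tent_ne_zero _⟩,
  ⟨fun a => polar (1 - 2 * a, -(1 - |1 - 2 * a|)) 0, continuous_polar (by fun_prop) (by fun_prop)
    fun a => neg_tent_ne_zero _⟩,
  ⟨fun a => if a ≤ 1 / 2 then polar (1, 0) (clamp (2 * a))
      else polar (-1, 0) (clamp (2 - 2 * a)), by
    refine Continuous.if_le (continuous_polar (by fun_prop) (by fun_prop) (by simp))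
      (continuous_polar (by fun_prop) (by fun_prop) (by simp)) (by fun_prop) (by fun_prop) ?_
    rintro a rfl
    norm_num [clamp_of_one_le, polar_one_zero]⟩]

/-- The height function of the deformation to the inner boundary: points of height at most `1` move
to the removed circle, the others to the core at radial coordinate one less than the height. -/
noncomputable def height (v : ℝ × ℝ) (s : I) : ℝ := 2 * s * |v.1| / ‖v‖

/-- The direction in which the deformation to the inner boundary has moved the point `(v, s)` at
time `t`. It becomes horizontal for points of height at least `1`. -/
noncomputable def tilt (v : ℝ × ℝ) (s : I) (t : ℝ) : ℝ × ℝ :=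
  (v.1, clamp (1 - t * height v s) * v.2)

/-- The horizontal coordinate of a direction, normalised in the `ℓ¹` norm. -/
noncomputable def taxicab (v : ℝ × ℝ) : ℝ := v.1 / (|v.1| + |v.2|)

/-- The position of the end point of `(v, s)` on its arc of the spine. -/
noncomputable def innerCoord (v : ℝ × ℝ) (s : I) : I :=
  clamp ((1 - taxicab (tilt v s 1) * min 1 (2 - height v s)) / 2)

/-- The arc of the spine to which the deformation to the inner boundary moves `(v, s)`. -/
noncomputable def innerIndex (v : ℝ × ℝ) (s : I) : Fin 3 :=
  if 0 ≤ min (1 - height v s) v.2 then 0 else if 0 ≤ min (1 - height v s) (-v.2) then 1 else 2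

lemma height_neg (v : ℝ × ℝ) (s : I) : height (-v) s = height v s := by
  simp [height]

lemma height_zero (v : ℝ × ℝ) : height v 0 = 0 := by
  simp [height]

lemma height_le_two (v : ℝ × ℝ) (s : I) : height v s ≤ 2 := by
  refine div_le_of_le_mul₀ (norm_nonneg v) zero_le_two ?_
  have h : (s : ℝ) * |v.1| ≤ 1 * ‖v‖ :=
    mul_le_mul s.2.2 (abs_fst_le_norm v) (abs_nonneg _) zero_le_one
  linarith

lemma height_one {v : ℝ × ℝ} (hpos : 0 < v.1) (hle : |v.2| ≤ v.1) : height v 1 = 2 := by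
  rw [height, norm_eq_max_abs, abs_of_pos hpos, max_eq_left hle]
  simp [hpos.ne']

lemma tilt_ne_zero {v : ℝ × ℝ} (hv : v ≠ 0) (s : I) (t : ℝ) : tilt v s t ≠ 0 := by
  intro h
  have h₁ : v.1 = 0 := congrArg Prod.fst h
  have h₂ : (clamp (1 - t * height v s) : ℝ) * v.2 = 0 := congrArg Prod.snd h
  refine hv (Prod.ext h₁ ?_)
  simpa [height, h₁, clamp_of_one_le] using h₂

lemma continuous_height : Continuous fun x : ℝ × I => height (circlePoint x.1) x.2 := by
  have hne : ∀ x : ℝ × I, ‖circlePoint x.1‖ ≠ 0 := fun x =>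
    norm_ne_zero_iff.mpr (circlePoint_ne_zero x.1)
  unfold height
  fun_prop (disch := exact hne)

lemma taxicab_denom_pos {v : ℝ × ℝ} (hv : v ≠ 0) : 0 < |v.1| + |v.2| := by
  by_contra! h
  refine hv (Prod.ext ?_ ?_) <;> refine abs_nonpos_iff.mp ?_ <;>
    linarith [abs_nonneg v.1, abs_nonneg v.2]

lemma abs_taxicab_le_one (v : ℝ × ℝ) : |taxicab v| ≤ 1 := by
  rw [taxicab, abs_div]
  refine div_le_one_of_le₀ ((le_add_of_nonneg_right (abs_nonneg v.2)).trans (le_abs_self _))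
    (abs_nonneg _)

lemma coe_innerCoord (v : ℝ × ℝ) (s : I) :
    (innerCoord v s : ℝ) = (1 - taxicab (tilt v s 1) * min 1 (2 - height v s)) / 2 := by
  have hmin : |min 1 (2 - height v s)| ≤ 1 :=
    abs_le.mpr ⟨by linarith [le_min zero_le_one (sub_nonneg.mpr (height_le_two v s))],
      min_le_left _ _⟩
  have h : |taxicab (tilt v s 1) * min 1 (2 - height v s)| ≤ 1 := by
    rw [abs_mul]
    exact mul_le_one₀ (abs_taxicab_le_one _) (abs_nonneg _) hmin
  obtain ⟨h₁, h₂⟩ := abs_le.mp h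
  exact coe_clamp ⟨by linarith, by linarith⟩

lemma innerCoord_eq_zero_or_one {v : ℝ × ℝ} (hv : v ≠ 0) {s : I} (hle : height v s ≤ 1)
    (h : height v s = 1 ∨ v.2 = 0) :
    (innerCoord v s : ℝ) = 0 ∨ (innerCoord v s : ℝ) = 1 := by
  have hsnd : (tilt v s 1).2 = 0 := by
    rcases h with h | h <;> simp [tilt, h, clamp_of_nonpos]
  have hfst : (tilt v s 1).1 ≠ 0 := fun h => tilt_ne_zero hv s 1 (Prod.ext h hsnd)
  rw [coe_innerCoord, min_eq_left (by linarith), taxicab, hsnd, abs_zero, add_zero]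
  rcases abs_choice (tilt v s 1).1 with h | h <;> rw [h]
  · left; simp [hfst]
  · right; rw [div_neg, div_self hfst]; norm_num

lemma continuous_innerCoord :
    Continuous fun x : ℝ × I => innerCoord (circlePoint x.1) x.2 := by
  have hne : ∀ x : ℝ × I,
      |(tilt (circlePoint x.1) x.2 1).1| + |(tilt (circlePoint x.1) x.2 1).2| ≠ 0 :=
    fun x => (taxicab_denom_pos (tilt_ne_zero (circlePoint_ne_zero _) _ _)).ne'
  have hheight := continuous_height
  unfold innerCoord taxicab tilt at *
  fun_prop (disch := exact hne)

lemma continuous_innerPlace : Continuous fun x : ℝ × I =>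
    arc (innerIndex (circlePoint x.1) x.2) (innerCoord (circlePoint x.1) x.2) := by
  have hcoord := continuous_subtype_val.comp continuous_innerCoord
  have hheight := continuous_height
  refine continuous_arc_ite (by fun_prop) (by fun_prop) hcoord ?_ fun x h => ?_
  · refine continuous_arc_ite (by fun_prop) (by fun_prop) hcoord ?_ fun x h => ?_
    · exact (map_continuous (arc 2)).comp hcoord
    · refine innerCoord_eq_zero_or_one (circlePoint_ne_zero _) ?_ ?_
      · linarith [h.trans_le (min_le_left _ _)]
      · rcases min_choice (1 - height (circlePoint x.1) x.2) (-(circlePoint x.1).2) with h' | h'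
        · exact .inl (by linarith)
        · exact .inr (by linarith)
  · refine innerCoord_eq_zero_or_one (circlePoint_ne_zero _) ?_ ?_
    · linarith [h.trans_le (min_le_left _ _)]
    · rcases min_choice (1 - height (circlePoint x.1) x.2) (circlePoint x.1).2 with h' | h'
      · exact .inl (by linarith)
      · exact .inr (by linarith)

lemma sameRay_taxicab_of_nonneg {v : ℝ × ℝ} (hv : v ≠ 0) (h : 0 ≤ v.2) :
    SameRay ℝ (taxicab v, 1 - |taxicab v|) v := by
  have hpos := taxicab_denom_pos hv
  have heq : (taxicab v, 1 - |taxicab v|) = (|v.1| + |v.2|)⁻¹ • v := by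
    ext
    · exact div_eq_inv_mul _ _
    · simp only [taxicab, abs_div, abs_of_pos hpos, Prod.smul_snd, smul_eq_mul]
      field_simp
      rw [abs_of_nonneg h]
      ring
  rw [heq]
  exact SameRay.sameRay_pos_smul_left v (inv_pos.mpr hpos)

lemma sameRay_taxicab_of_nonpos {v : ℝ × ℝ} (hv : v ≠ 0) (h : v.2 ≤ 0) :
    SameRay ℝ (taxicab v, -(1 - |taxicab v|)) v := by
  have hpos := taxicab_denom_pos hv
  have heq : (taxicab v, -(1 - |taxicab v|)) = (|v.1| + |v.2|)⁻¹ • v := by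
    ext
    · exact div_eq_inv_mul _ _
    · simp only [taxicab, abs_div, abs_of_pos hpos, Prod.smul_snd, smul_eq_mul]
      field_simp
      rw [abs_of_nonpos h]
      ring
  rw [heq]
  exact SameRay.sameRay_pos_smul_left v (inv_pos.mpr hpos)

lemma innerSpine_two_of_le {a : ℝ} (h : a ≤ 1 / 2) :
    innerSpine 2 a = polar (1, 0) (clamp (2 * a)) :=
  if_pos h

lemma innerSpine_two_of_ge {a : ℝ} (h : 1 / 2 ≤ a) :
    innerSpine 2 a = polar (-1, 0) (clamp (2 - 2 * a)) := by
  rcases h.eq_or_lt with rfl | h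
  · rw [innerSpine_two_of_le le_rfl]
    norm_num [clamp_of_one_le, polar_one_zero]
  · exact if_neg h.not_ge

lemma one_sub_two_mul_innerCoord {v : ℝ × ℝ} {s : I} (h : height v s ≤ 1) :
    1 - 2 * (innerCoord v s : ℝ) = taxicab (tilt v s 1) := by
  rw [coe_innerCoord, min_eq_left (by linarith)]
  ring

lemma innerSpine_two_innerCoord {v : ℝ × ℝ} (hv : v ≠ 0) {s : I} (h : 1 ≤ height v s) :
    innerSpine 2 (innerCoord v s) = polar (tilt v s 1) (clamp (height v s - 1)) := by
  have htilt : tilt v s 1 = (v.1, 0) := by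
    simp [tilt, clamp_of_nonpos (by linarith : 1 - height v s ≤ 0)]
  have hne : v.1 ≠ 0 := fun h₁ => tilt_ne_zero hv s 1 (by rw [htilt, h₁]; rfl)
  have hcoord : (innerCoord v s : ℝ) = (1 - v.1 / |v.1| * (2 - height v s)) / 2 := by
    rw [coe_innerCoord, htilt, taxicab, abs_zero, add_zero, min_eq_right (by linarith)]
  have hle := height_le_two v s
  rw [htilt]
  rcases lt_or_gt_of_ne hne with hlt | hgt
  · rw [abs_of_neg hlt, div_neg, div_self hne] at hcoord
    have hray : ((v.1, 0) : ℝ × ℝ) = (-v.1) • (-1, 0) := by simp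
    rw [innerSpine_two_of_ge (by linarith), hray, polar_smul (by simp) (neg_pos.mpr hlt), hcoord]
    congr 2
    ring
  · rw [abs_of_pos hgt, div_self hne] at hcoord
    have hray : ((v.1, 0) : ℝ × ℝ) = v.1 • (1, 0) := by simp
    rw [innerSpine_two_of_le (by linarith), hray, polar_smul (by simp) hgt, hcoord]
    congr 2
    ring

lemma innerSpine_innerIndex {v : ℝ × ℝ} (hv : v ≠ 0) (s : I) :
    innerSpine (innerIndex v s) (innerCoord v s) =
      polar (tilt v s 1) (clamp (height v s - 1)) := by
  have hne := tilt_ne_zero hv s 1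
  have hclamp := (clamp (1 - 1 * height v s)).2.1
  unfold innerIndex
  split_ifs with h₀ h₁
  · obtain ⟨hheight, hsnd⟩ := le_min_iff.mp h₀
    rw [clamp_of_nonpos (by linarith)]
    refine polar_congr (tent_ne_zero _) hne ?_ 0
    rw [one_sub_two_mul_innerCoord (by linarith)]
    exact sameRay_taxicab_of_nonneg hne (mul_nonneg hclamp hsnd)
  · obtain ⟨hheight, hsnd⟩ := le_min_iff.mp h₁
    rw [clamp_of_nonpos (by linarith)]
    refine polar_congr (neg_tent_ne_zero _) hne ?_ 0
    rw [one_sub_two_mul_innerCoord (by linarith)]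
    exact sameRay_taxicab_of_nonpos hne (mul_nonpos_of_nonneg_of_nonpos hclamp (by linarith))
  · refine innerSpine_two_innerCoord hv (le_of_lt ?_)
    by_contra! hheight
    rcases le_total 0 v.2 with h | h
    · exact h₀ (le_min (by linarith) h)
    · exact h₁ (le_min (by linarith) (by linarith))

lemma innerSpine_zero (i : Fin 3) : innerSpine i 0 = polar (1, 0) 0 := by
  fin_cases i <;> simp [innerSpine, clamp_of_nonpos]

lemma innerSpine_one (i : Fin 3) : innerSpine i 1 = polar (-1, 0) 0 := by
  fin_cases i <;> norm_num [innerSpine, clamp_of_nonpos]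

lemma innerSpine_mem_C2 {i : Fin 3} (hi : i ∈ ({0, 1} : Set (Fin 3))) (a : I) :
    innerSpine i a ∈ C2 := by
  rcases hi with rfl | rfl <;> exact polar_mem_C2_iff.mpr rfl

lemma arc_innerIndex_neg {v : ℝ × ℝ} (hpos : 0 < v.1) (hle : |v.2| ≤ v.1) :
    arc (innerIndex (-v) 1) (innerCoord (-v) 1) = arc (innerIndex v 1) (innerCoord v 1) := by
  have hindex : ∀ w, height w 1 = 2 → innerIndex w 1 = 2 := fun w h => by
    have hlt : ∀ y, ¬0 ≤ min (1 - height w 1) y := fun y hy => by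
      linarith [(le_min_iff.mp hy).1]
    rw [innerIndex, if_neg (hlt _), if_neg (hlt _)]
  have hcoord : ∀ w, height w 1 = 2 → (innerCoord w 1 : ℝ) = 1 / 2 := fun w h => by
    rw [coe_innerCoord, h]
    norm_num
  have h := height_one hpos hle
  have h' := (height_neg v 1).trans h
  rw [hindex v h, hindex (-v) h', hcoord v h, hcoord (-v) h']

/-- The deformation that squeezes the punctured Möbius band onto the union of the removed circle and
the core of the Möbius band. -/
noncomputable def innerDeformation : SpineDeformation C2 where
  spine := innerSpine
  spine_zero i j := (innerSpine_zero i).trans (innerSpine_zero j).symm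
  spine_one i j := (innerSpine_one i).trans (innerSpine_one j).symm
  spine_mem _ hi := innerSpine_mem_C2 hi
  index := innerIndex
  coord := innerCoord
  motion v s t := polar (tilt v s t) (clamp ((1 - t) * s + t * (height v s - 1)))
  continuous_place := continuous_innerPlace
  place_neg _ := arc_innerIndex_neg
  index_mem v _ s hmem := by
    obtain rfl := polar_mem_C2_iff.mp hmem
    rw [innerIndex, height_zero]
    rcases le_total 0 v.2 with h | h
    · exact .inl (if_pos (le_min (by norm_num) h))
    · rw [if_pos (le_min (by norm_num) (neg_nonneg.mpr h))]
      split_ifs <;> simp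
  continuous_motion := by
    have hheight : Continuous fun x : (ℝ × I) × I => height (circlePoint x.1.1) x.1.2 :=
      continuous_height.comp continuous_fst
    refine continuous_polar ?_ (by fun_prop) fun _ => tilt_ne_zero (circlePoint_ne_zero _) _ _
    unfold tilt
    fun_prop
  motion_neg v hpos hle t := by
    have hneg : tilt (-v) 1 t = -tilt v 1 t := by simp [tilt, height_neg]
    have hone : clamp ((1 - t) * ((1 : I) : ℝ) + t * (height v 1 - 1)) = 1 :=
      clamp_of_one_le (by rw [height_one hpos hle, Icc.coe_one]; linarith)
    rw [height_neg, hone, hneg]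
    refine polar_neg_one (tilt_ne_zero (fun h => hpos.ne' (congrArg Prod.fst h)) _ _) ?_
    obtain ⟨h₀, h₁⟩ := (clamp (1 - t * height v 1)).2
    rw [tilt, abs_mul, abs_of_nonneg h₀, abs_of_pos hpos]
    exact (mul_le_of_le_one_left (abs_nonneg _) h₁).trans hle
  motion_zero v _ s := by simp [tilt, clamp_of_one_le]
  motion_one v hv s := by simp [innerSpine_innerIndex hv]
  motion_mem v _ s hmem t := by
    obtain rfl := polar_mem_C2_iff.mp hmem
    exact polar_mem_C2_iff.mpr (clamp_of_nonpos (by simp [height_zero, t.2.1]))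

end Inner

end Domination

section LiftsToLine

open CayleyGraph Sanov Theta

/-- The map `q` to the theta graph lifts to the universal cover with values in one component of the
preimage of the circle. -/
def LiftsToLine {A : Type*} [TopologicalSpace A] (q : C(A, Theta)) : Prop :=
  ∃ (u : Sanov) (κ : C(A, CayleyGraph gen)), ∀ x, κ x ∈ u • line ∧ proj gen (κ x) = q x

lemma liftsToLine_of_isQuotientMap {A Y : Type*} [TopologicalSpace A] [TopologicalSpace Y]
    {p : C(Y, A)} (hp : Topology.IsQuotientMap p) {q : C(A, Theta)} (κ : C(Y, CayleyGraph gen))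
    (hfac : Function.FactorsThrough κ p) (hproj : ∀ y, proj gen (κ y) = q (p y)) (u : Sanov)
    (hκ : ∀ y, κ y ∈ u • line) : LiftsToLine q := by
  have hlift : ∀ y, hp.lift κ hfac (p y) = κ y := DFunLike.congr_fun (hp.lift_comp κ hfac)
  refine ⟨u, hp.lift κ hfac, hp.surjective.forall.mpr fun y => ?_⟩
  rw [hlift]
  exact ⟨hκ y, hproj y⟩

lemma LiftsToLine.nullhomotopic {A : Type*} [TopologicalSpace A] {q : C(A, circle)}
    (h : LiftsToLine (ContinuousMap.comp ⟨(↑), continuous_subtype_val⟩ q)) : q.Nullhomotopic := by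
  obtain ⟨u, κ, hκ⟩ := h
  let toLine : C(A, ℝ) := ⟨fun x => position (u⁻¹ • κ x),
    (map_continuous position).comp ((map_continuous κ).const_smul u⁻¹)⟩
  let wind : C(ℝ, circle) := ⟨fun x => ⟨loop x, loop_mem_circle x⟩,
    (map_continuous loop).subtype_mk _⟩
  have hfactor : (wind.comp (.id ℝ)).comp toLine = q := by
    ext x
    obtain ⟨hmem, hproj⟩ := hκ x
    exact (loop_position (mem_smul_set_iff_inv_smul_mem.mp hmem)).trans
      ((proj_smul _ _).trans hproj)
  exact hfactor ▸ ((id_nullhomotopic ℝ).comp_right wind).comp_left toLine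

end LiftsToLine

section Deck

open CayleyGraph Sanov Theta

/-- A lift to universal covers of a map `X → Theta` with `C2 → circle`, in the polar coordinates
`band`, such that `C2` goes to the line. The group elements `rot` and `flip` are the monodromies
of the lift around `C2` and across the sides of the square. -/
structure BandLift (q : C(X, Theta)) where
  map : C(ℝ × I, CayleyGraph gen)
  proj_map : ∀ x, proj gen (map x) = q (band x)
  map_zero_mem : ∀ θ, map (θ, 0) ∈ line
  rot : Sanov
  map_add_two_pi : ∀ θ s, map (θ + 2 * π, s) = rot • map (θ, s)
  flip : Sanov
  map_add_pi : ∀ θ ∈ Icc (-(π / 4)) (π / 4), map (θ + π, 1) = flip • map (θ, 1)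

theorem exists_bandLift {q : C(X, Theta)} (hq : MapsTo q C2 circle) : Nonempty (BandLift q) := by
  obtain ⟨e, he⟩ := Quotient.exists_rep (q (band (0, 0)))
  obtain ⟨F, -, hF⟩ := exists_lift (q.comp band) (0, 0) e he
  have hslice (s : I) : Continuous fun θ => F (θ, s) := by fun_prop
  obtain ⟨u, hu⟩ := exists_mapsTo_smul_subgraph gen_mem_upper isPreconnected_univ univ_nonempty
    (hslice 0).continuousOn fun θ _ => (hF (θ, 0)).symm ▸ hq (band_zero_mem_C2 θ)
  have hproj (x) : proj gen (u⁻¹ • F x) = q (band x) := (proj_smul _ _).trans (hF x)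
  have hcont : Continuous fun x => u⁻¹ • F x := (map_continuous F).const_smul u⁻¹
  obtain ⟨k, hk⟩ := exists_smul_eqOn (isPreconnected_univ (α := ℝ × I)) univ_nonempty
    (κ := fun x => u⁻¹ • F (x.1 + 2 * π, x.2)) (κ' := fun x => u⁻¹ • F x)
    (hcont.comp (by fun_prop)).continuousOn hcont.continuousOn
    fun x _ => by rw [hproj, hproj, band_add_two_pi]
  obtain ⟨w, hw⟩ := exists_smul_eqOn (isPreconnected_Icc (a := -(π / 4)) (b := π / 4))
    (nonempty_Icc.mpr (by linarith [Real.pi_pos]))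
    (κ := fun θ => u⁻¹ • F (θ + π, 1)) (κ' := fun θ => u⁻¹ • F (θ, 1))
    (hcont.comp (by fun_prop)).continuousOn (hcont.comp (by fun_prop)).continuousOn
    fun θ hθ => by
      obtain ⟨-, hle⟩ := abs_sin_le_cos hθ
      rw [hproj, hproj, band_add_pi (hle.trans (le_abs_self _))]
  exact ⟨⟨⟨_, hcont⟩, hproj, fun θ => mem_smul_set_iff_inv_smul_mem.mp (hu (mem_univ θ)),
    k, fun θ s => hk (θ, s) (mem_univ _), w, hw⟩⟩

namespace BandLift

variable {q : C(X, Theta)} (B : BandLift q)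

lemma rot_mem_upper : B.rot ∈ upper := by
  have h : B.map (0 + 2 * π, 0) ∈ B.rot • line := by
    rw [B.map_add_two_pi]
    exact smul_mem_smul_set (B.map_zero_mem 0)
  have h' := inv_mul_mem_of_mem_smul_subgraph gen_mem_upper (u := 1)
    (by simpa only [one_smul] using B.map_zero_mem (0 + 2 * π)) h
  simpa only [inv_one, one_mul] using h'

lemma map_three_pi_div_four_add_pi :
    B.map (3 * π / 4 + π, 1) = (B.rot * B.flip⁻¹) • B.map (3 * π / 4, 1) := by
  have h := B.map_add_pi (-(π / 4)) ⟨le_rfl, by linarith [Real.pi_pos]⟩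
  have h' := B.map_add_two_pi (-(π / 4)) 1
  rw [show -(π / 4) + π = 3 * π / 4 by ring] at h
  rw [show -(π / 4) + 2 * π = 3 * π / 4 + π by ring] at h'
  rw [h, h', mul_smul, inv_smul_smul]

lemma map_pi_div_four_add_pi : B.map (π / 4 + π, 1) = B.flip • B.map (π / 4, 1) :=
  B.map_add_pi _ ⟨by linarith [Real.pi_pos], le_rfl⟩

lemma exists_mapsTo_upperAngles (hq : MapsTo q C1 circle) : ∃ u : Sanov,
    MapsTo (fun θ => B.map (θ, 1)) upperAngles (u • line) ∧
    MapsTo (fun θ => B.map (θ + π, 1)) upperAngles ((B.flip * u) • line) ∧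
    u⁻¹ * (B.flip⁻¹ * B.rot * B.flip⁻¹) * u ∈ upper := by
  have hpi := Real.pi_pos
  have hright : π / 4 ∈ upperAngles := ⟨le_rfl, by linarith⟩
  have hleft : 3 * π / 4 ∈ upperAngles := ⟨by linarith, le_rfl⟩
  obtain ⟨u, hu⟩ := exists_mapsTo_smul_subgraph gen_mem_upper isPreconnected_Icc ⟨_, hright⟩
    (κ := fun θ => B.map (θ, 1)) (by fun_prop)
    fun θ hθ => by rw [B.proj_map]; exact hq (band_mem_C1 hθ)
  obtain ⟨v, hv⟩ := exists_mapsTo_smul_subgraph gen_mem_upper isPreconnected_Icc ⟨_, hright⟩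
    (κ := fun θ => B.map (θ + π, 1)) (by fun_prop)
    fun θ hθ => by rw [B.proj_map]; exact hq (band_add_pi_mem_C1 hθ)
  have hmem_right : B.map (π / 4 + π, 1) ∈ (B.flip * u) • line := by
    rw [map_pi_div_four_add_pi, mul_smul]
    exact smul_mem_smul_set (hu hright)
  have hmem_left : B.map (3 * π / 4 + π, 1) ∈ (B.rot * B.flip⁻¹ * u) • line := by
    rw [map_three_pi_div_four_add_pi, mul_smul _ u]
    exact smul_mem_smul_set (hu hleft)
  have hvu : v • line = (B.flip * u) • line := by
    have h := inv_mul_mem_of_mem_smul_subgraph gen_mem_upper hmem_right (hv hright)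
    rw [← mul_inv_cancel_left (B.flip * u) v, mul_smul _ (_ * v), smul_subgraph h]
  rw [hvu] at hv
  refine ⟨u, hu, hv, ?_⟩
  simpa only [mul_inv_rev, mul_assoc] using
    inv_mul_mem_of_mem_smul_subgraph gen_mem_upper (hv hleft) hmem_left

theorem liftsToLine_C2 (hrot : B.rot = 1) : LiftsToLine (q.restrict C2) := by
  let p : C(ℝ, C2) := ⟨fun θ => ⟨band (θ, 0), band_zero_mem_C2 θ⟩, by fun_prop⟩
  have hper : Function.Periodic (fun θ => B.map (θ, 0)) (2 * π) := fun θ =>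
    (B.map_add_two_pi θ 0).trans (by rw [hrot, one_smul])
  have hp : Topology.IsQuotientMap p := by
    refine isQuotientMap_of_isCompact p.continuous (K := Icc (-π) π) isCompact_Icc ?_
    rintro ⟨x, hx⟩ -
    obtain ⟨θ, hθ, s, rfl⟩ := exists_band x
    obtain rfl := polar_mem_C2_iff.mp hx
    exact ⟨θ, hθ, rfl⟩
  refine liftsToLine_of_isQuotientMap hp ⟨fun θ => B.map (θ, 0), by fun_prop⟩ ?_
    (fun θ => B.proj_map _) 1 fun θ => (one_smul Sanov line).symm ▸ B.map_zero_mem θ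
  intro θ θ' h
  rcases (band_eq_band_iff.mp (congrArg Subtype.val h)).2 with ⟨n, rfl⟩ | ⟨h01, -⟩
  · exact (hper.int_mul n θ).symm
  · exact absurd h01 zero_ne_one

theorem liftsToLine_C1 (hq : MapsTo q C1 circle) (hrot : B.flip⁻¹ * B.rot * B.flip⁻¹ = 1) :
    LiftsToLine (q.restrict C1) := by
  obtain ⟨u, hu, hu', -⟩ := B.exists_mapsTo_upperAngles hq
  have hcont : Continuous fun θ : upperAngles => B.map (θ + π, 1) := by fun_prop
  let κ : C(upperAngles ⊕ upperAngles, CayleyGraph gen) :=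
    ⟨Sum.elim (fun θ => B.map (θ, 1)) fun θ => B.flip⁻¹ • B.map (θ + π, 1),
      continuous_sumElim.mpr ⟨by fun_prop, (continuous_const_smul _).comp hcont⟩⟩
  have hends : ∀ θ, θ = π / 4 ∨ θ = 3 * π / 4 → B.map (θ, 1) = B.flip⁻¹ • B.map (θ + π, 1) := by
    rintro θ (rfl | rfl)
    · rw [map_pi_div_four_add_pi, inv_smul_smul]
    · rw [map_three_pi_div_four_add_pi, smul_smul, ← mul_assoc, hrot, one_smul]
  have hglue : ∀ θ θ' : upperAngles, outerArcs (.inl θ) = outerArcs (.inr θ') →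
      κ (.inl θ) = κ (.inr θ') := by
    rintro ⟨θ, hθ⟩ ⟨θ', hθ'⟩ h
    obtain ⟨rfl, hend⟩ := eq_of_band_eq_band_add_pi hθ hθ' (congrArg Subtype.val h)
    exact hends θ hend
  refine liftsToLine_of_isQuotientMap isQuotientMap_outerArcs κ ?_ ?_ u ?_
  · rintro (θ | θ) (θ' | θ') h
    · rw [Subtype.ext (band_injOn_upperAngles θ.2 θ'.2 (congrArg Subtype.val h))]
    · exact hglue θ θ' h
    · exact (hglue θ' θ h.symm).symm
    · rw [Subtype.ext (band_add_pi_injOn_upperAngles θ.2 θ'.2 (congrArg Subtype.val h))]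
  · rintro (θ | θ)
    exacts [B.proj_map _, (proj_smul _ _).trans (B.proj_map _)]
  · rintro (θ | θ)
    · exact hu θ.2
    · have h : B.map (θ + π, 1) ∈ (B.flip * u) • line := hu' θ.2
      rwa [mul_smul, mem_smul_set_iff_inv_smul_mem] at h

lemma map_mem_line (hq : MapsTo q C1 circle) (hflip : B.flip ∈ upper)
    (hne : B.flip⁻¹ * B.rot * B.flip⁻¹ ≠ 1) {x : ℝ × I} (hx : band x ∈ Bd) : B.map x ∈ line := by
  obtain ⟨θ, s⟩ := x
  rcases hx with hx | hx
  case inr =>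
    obtain rfl := polar_mem_C2_iff.mp hx
    exact B.map_zero_mem θ
  obtain ⟨rfl, hle⟩ := band_mem_C1_iff.mp hx
  obtain ⟨u, hu, hu', hconj⟩ := B.exists_mapsTo_upperAngles hq
  have hmul := upper.mul_mem (upper.mul_mem (upper.inv_mem hflip) B.rot_mem_upper)
    (upper.inv_mem hflip)
  have huU := mem_upper_of_conj_mem hmul hne hconj
  rw [smul_subgraph huU] at hu
  rw [smul_subgraph (upper.mul_mem hflip huU)] at hu'
  have hper : Function.Periodic (fun θ => B.map (θ, 1) ∈ line) (2 * π) := fun θ =>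
    propext <| by simp only [map_add_two_pi, ← mem_inv_smul_set_iff,
      smul_subgraph (upper.inv_mem B.rot_mem_upper)]
  obtain ⟨n, hn⟩ := exists_add_int_mul_mem_upperAngles hle
  refine (hper.int_mul n θ).mp ?_
  rcases hn with hn | hn
  · exact hu hn
  · simpa only [sub_add_cancel] using hu' hn

theorem exists_homotopicRel (hflip : B.flip ∈ upper) (hB : ∀ x, band x ∈ Bd → B.map x ∈ line) :
    ∃ g : C(X, Theta), q.HomotopicRel g Bd ∧ ∀ x, g x ∈ circle := by
  have hcontract {u : Sanov} (hu : u ∈ upper) (e : CayleyGraph gen) (t : I) :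
      proj gen (descent.contraction (u • e) t) = proj gen (descent.contraction e t) := by
    rw [descent.contraction_smul hu, proj_smul]
  obtain ⟨H, hH⟩ := exists_homotopy_comp_band_eq
    ⟨fun x : (ℝ × I) × I => proj gen (descent.contraction (B.map x.1) x.2), by fun_prop⟩
    (fun θ s t => by simp only [ContinuousMap.coe_mk, map_add_two_pi, hcontract B.rot_mem_upper])
    (fun θ hθ t => by simp only [ContinuousMap.coe_mk, B.map_add_pi θ hθ, hcontract hflip])
  refine ⟨⟨fun x => H (1, x), by fun_prop⟩, ⟨⟨H, fun x => ?_, fun _ => rfl⟩, fun t x hx => ?_⟩,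
    fun x => ?_⟩
  all_goals obtain ⟨y, rfl⟩ := isQuotientMap_band.surjective x
  · exact (hH y 0).trans ((congrArg _ (descent.contraction_zero _)).trans (B.proj_map y))
  · exact (hH y t).trans ((congrArg _ (descent.contraction_of_mem (hB y hx) t)).trans
      (B.proj_map y))
  · have hmem : descent.contraction (B.map y) 1 ∈ (1 : Sanov) • line := by
      rw [one_smul]
      exact descent.contraction_one_mem _
    exact (congrArg (· ∈ circle) (hH y 1)).mpr (proj_mem_orbitSubgraph hmem)

end BandLift

theorem exists_homotopicRel_of_not_liftsToLine {q : C(X, Theta)} (hq : MapsTo q Bd circle)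
    (h₁ : ¬ LiftsToLine (q.restrict C1)) (h₂ : ¬ LiftsToLine (q.restrict C2)) :
    ∃ g : C(X, Theta), q.HomotopicRel g Bd ∧ ∀ x, g x ∈ circle := by
  have hq₁ : MapsTo q C1 circle := hq.mono_left subset_union_left
  obtain ⟨B⟩ := exists_bandLift (hq.mono_left subset_union_right)
  have hrot : B.rot ≠ 1 := mt B.liftsToLine_C2 h₂
  have hne : B.flip⁻¹ * B.rot * B.flip⁻¹ ≠ 1 := mt (B.liftsToLine_C1 hq₁) h₁
  obtain ⟨u, -, -, hconj⟩ := B.exists_mapsTo_upperAngles hq₁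
  have hflip : B.flip ∈ upper :=
    inv_mem_iff.mp (mem_upper_of_conj_mul_mul_mem B.rot_mem_upper hrot hconj)
  exact B.exists_homotopicRel hflip fun x => B.map_mem_line hq₁ hflip hne

end Deck

section Main

open Theta

lemma BoundaryHomotopic.trans {f g h : C(X, X)} (hfg : BoundaryHomotopic f g)
    (hgh : BoundaryHomotopic g h) : BoundaryHomotopic f h := by
  obtain ⟨F, hF⟩ := hfg
  obtain ⟨G, hG⟩ := hgh
  refine ⟨F.trans G, fun x hx t => ?_⟩
  rw [ContinuousMap.Homotopy.trans_apply]
  split_ifs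
  exacts [hF x hx _, hG x hx _]

theorem inessential_of_liftsToLine {C : Set X} {A : Type*} [TopologicalSpace A] (r : C(A, C))
    {φ : C(X, Theta)} {ψ : C(Theta, X)} (H : (ContinuousMap.id X).Homotopy (ψ.comp φ))
    (hφ : MapsTo φ C circle) (hψ : MapsTo ψ circle C) (hH : ∀ t, MapsTo (fun x => H (t, x)) C C)
    (h : LiftsToLine (φ.comp (ContinuousMap.comp ⟨(↑), continuous_subtype_val⟩ r))) :
    Inessential r := by
  let φC : C(C, circle) := ⟨hφ.restrict, φ.continuous.restrict hφ⟩
  let ψC : C(circle, C) := ⟨hψ.restrict, ψ.continuous.restrict hψ⟩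
  let HC : (ContinuousMap.id C).Homotopy (ψC.comp φC) :=
    { toFun := fun x => ⟨H (x.1, x.2), hH x.1 x.2.2⟩
      map_zero_left := fun x => Subtype.ext (H.apply_zero _)
      map_one_left := fun x => Subtype.ext (H.apply_one _) }
  have hhom : r.Homotopic ((ψC.comp φC).comp r) := ⟨HC.compContinuousMap r⟩
  obtain ⟨b, hb⟩ := (LiftsToLine.nullhomotopic (q := φC.comp r) h).comp_right ψC
  exact ⟨b, hhom.trans hb⟩

theorem exists_boundaryHomotopic {C : Set X} (hC : C ⊆ Bd) (hdom : PairDominated C circle)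
    {f : C(X, X)} (hf : MapsTo f Bd C)
    (h₁ : Essential (restrictMap f (hf.mono_left subset_union_left : MapsTo f C1 C)))
    (h₂ : Essential (restrictMap f (hf.mono_left subset_union_right : MapsTo f C2 C))) :
    ∃ g : C(X, X), BoundaryHomotopic f g ∧ ∀ x, g x ∈ C := by
  obtain ⟨φ, ψ, H, hφ, hψ, hH⟩ := hdom
  have hq : MapsTo (φ.comp f) Bd circle := fun x hx => hφ (hf hx)
  obtain ⟨g, ⟨G⟩, hg⟩ := exists_homotopicRel_of_not_liftsToLine hq
    (fun h => h₁ (inessential_of_liftsToLine _ H hφ hψ hH h))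
    (fun h => h₂ (inessential_of_liftsToLine _ H hφ hψ hH h))
  have hfirst : BoundaryHomotopic f (ψ.comp (φ.comp f)) :=
    ⟨H.compContinuousMap f, fun x hx t => hC (hH t (hf hx))⟩
  have hsecond : BoundaryHomotopic (ψ.comp (φ.comp f)) (ψ.comp g) := by
    refine ⟨(G.compContinuousMap ψ).toHomotopy, fun x hx t => ?_⟩
    exact (congrArg (· ∈ Bd) ((G.compContinuousMap ψ).eq_fst t hx)).mpr (hC (hψ (hq hx)))
  exact ⟨ψ.comp g, hfirst.trans hsecond, fun x => hψ (hg x)⟩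

end Main

/-- A boundary-essential boundary-preserving map of the punctured Möbius band whose
boundary image lies in a single boundary circle `Cj` is boundary-homotopic to a map
with image inside `Cj`; in particular every fixed point of that map lies on `Cj`. -/
theorem stmt_9 (f : C(X, X)) (hf : BoundaryPreserving f) (Cj : Set X)
    (hj : Cj = C1 ∨ Cj = C2) (hmaps : MapsTo f Bd Cj)
    (he1 : Essential (restrictMap f (hmaps.mono_left Set.subset_union_left : MapsTo f C1 Cj)))
    (he2 : Essential (restrictMap f (hmaps.mono_left Set.subset_union_right : MapsTo f C2 Cj))) :
    ∃ g : C(X, X), BoundaryHomotopic f g ∧ (∀ x : X, g x ∈ Cj) ∧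
      ∀ x : X, g x = x → x ∈ Cj := by
  have hCj : Cj ⊆ Bd := by
    rcases hj with rfl | rfl
    exacts [subset_union_left, subset_union_right]
  have hdom : PairDominated Cj Theta.circle := by
    rcases hj with rfl | rfl
    exacts [outerDeformation.pairDominated, innerDeformation.pairDominated]
  obtain ⟨g, hfg, hg⟩ := exists_boundaryHomotopic hCj hdom hmaps he1 he2
  exact ⟨g, hfg, hg, fun x hx => hx ▸ hg x⟩

end PMB
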